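/- Let u ≠ v ∈ {1,…,n} with a_u = a_v, and fix k¹ < k² in ℕ^ℓ. Fix any outcome (w, T) of the relaxed extended walk w = w^{k¹,k²} and its dependency tree in which μ^{k¹} and μ^{k²} exist; set φ = μ^{k¹} + 1 and ψ = μ^{k²} + 1, and assume w_φ = u and w_ψ = v. If there exists a pair (α̃, β̃) with 0 < α̃ < β̃ < ψ and a_{w_α̃} = a_{w_β̃}, then there exist two nodes α and β such that α ≠ β, a_{w_α} = a_{w_β}, {α, β} ≠ {φ, ψ}, and there is no collision between any two of the four paths p(φ−1), p(ψ−1), p(α−1), p(β−1). -/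

import Mathlib

open MeasureTheory
open scoped Classical ENNReal

noncomputable section

namespace EDW

/-- The star-extended domain `[m] ∪ {⋆₀, ⋆₁, …}`: `Sum.inl x` is a base element of `[m]`,
`Sum.inr t` is the star `⋆_t`. -/
abbrev Dom (m : ℕ) : Type := Sum (Fin m) ℕ

/-- A position (node) of the extended walk: its vertex together with, for every level `i`,
the value `a_i(μ)` that was computed at this position (if assigned). -/
structure Node (m n : ℕ) : Type where
  vtx : Fin n
  tag : ℕ → Option (Dom m)

theorem freshStar_exists {m : ℕ} (C : Finset (Dom m)) :
    ∃ t : ℕ, (Sum.inr t : Dom m) ∉ C := by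
  by_contra hc
  push_neg at hc
  have hinj : Function.Injective (fun t : ℕ => (Sum.inr t : Dom m)) := by
    intro a b h
    simpa using h
  have hsub : Set.range (fun t : ℕ => (Sum.inr t : Dom m)) ⊆ ↑C := by
    rintro x ⟨t, rfl⟩
    exact hc t
  exact Set.infinite_range_of_injective hinj (C.finite_toSet.subset hsub)

/-- The least `t` with `⋆_t ∉ C`. -/
def freshStar {m : ℕ} (C : Finset (Dom m)) : ℕ := Nat.find (freshStar_exists C)

variable {m n : ℕ}

/-- One level of the extended-walk loop; `fuel` bounds the number of remaining loop
iterations, and `sub s'` is the level-`(i-1)` walk started at `s'`. -/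
def loopF (a : Fin n → Fin m) (g : ℕ → Dom m → Bool) (r : ℕ → Dom m → Fin n)
    (sub : Fin n → Option (List (Node m n))) (i : ℕ) :
    ℕ → Finset (Dom m) → Bool → Fin n → List (Node m n) → Option (List (Node m n))
  | 0, _, _, _, _ => none
  | fuel + 1, C, star, sj, acc =>
    match sub sj with
    | none => none
    | some subw =>
      match subw.getLast? with
      | none => none
      | some xnode =>
        let useBase : Prop := star = false ∧ (Sum.inl (a xnode.vtx) : Dom m) ∉ C
        let y : Dom m := if useBase then Sum.inl (a xnode.vtx) else Sum.inr (freshStar C)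
        let star' : Bool := if useBase then false else true
        let xnode' : Node m n := ⟨xnode.vtx, fun t => if t = i then some y else xnode.tag t⟩
        let acc' := acc ++ subw.dropLast ++ [xnode']
        if g i y then loopF a g r sub i fuel (insert y C) star' (r i y) acc' else some acc'

/-- `walkF fuel i s'` computes the extended walk `walk(s', i)`; it returns `none` if the
fuel is insufficient (the true walk is obtained by letting the fuel go to infinity). -/
def walkF (a : Fin n → Fin m) (g : ℕ → Dom m → Bool) (r : ℕ → Dom m → Fin n) :
    ℕ → ℕ → Fin n → Option (List (Node m n))
  | _, 0, s' => some [⟨s', fun _ => none⟩]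
  | 0, _ + 1, _ => none
  | fuel + 1, i + 1, s' =>
    loopF a g r (fun sj => walkF a g r fuel i sj) (i + 1) (fuel + 1) ∅ false s' []

/-- The extended walk `walk(s, ℓ)`: `some w` iff the walk terminates, with output `w`. -/
def extWalk (a : Fin n → Fin m) (g : ℕ → Dom m → Bool) (r : ℕ → Dom m → Fin n)
    (ℓ : ℕ) (s : Fin n) : Option (List (Node m n)) :=
  if h : ∃ fuel, (walkF a g r fuel ℓ s).isSome = true then walkF a g r (Nat.find h) ℓ s
  else none

/-! ### The relaxed extended walk -/

/-- Storage for the recorded sets `C^{i,k¹}`. -/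
abbrev Store (m : ℕ) : Type := ℕ → Option (Finset (Dom m))

/-- One level of the relaxed extended-walk loop. `subR k' st s'` is the relaxed recursive
call at level `i - 1` with index parameter `k'` and store `st`; `subU s'` is the last
vertex of the un-relaxed walk `walk(s', i-1)`.  The extra loop state is: `j`, the number
of level-`i` nodes produced so far; `Crec = C_{min(j, k¹_i)}`; and the store `st`. -/
def rloopF (a : Fin n → Fin m) (g : ℕ → Dom m → Bool) (r : ℕ → Dom m → Fin n)
    (ℓ : ℕ) (k1 k2 : ℕ → ℕ)
    (subR : (ℕ → ℕ) → Store m → Fin n → Option (List (Node m n) × Store m))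
    (subU : Fin n → Option (Fin n)) (i : ℕ) (kctx : ℕ → ℕ) :
    ℕ → Finset (Dom m) → Bool → Fin n → List (Node m n) → ℕ → Finset (Dom m) → Store m →
      Option (List (Node m n) × Store m)
  | 0, _, _, _, _, _, _, _ => none
  | fuel + 1, C, star, sj, acc, j, Crec, st =>
    match subR (fun t => if t = i then j else if i < t then kctx t else 0) st sj with
    | none => none
    | some (subw, st₁) =>
      match subU sj, subw.getLast? with
      | some xv, some lastnd =>
        let useBase : Prop := star = false ∧ (Sum.inl (a xv) : Dom m) ∉ C
        let y : Dom m := if useBase then Sum.inl (a xv) else Sum.inr (freshStar C)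
        let star' : Bool := if useBase then false else true
        let lastnd' : Node m n := ⟨lastnd.vtx, fun t => if t = i then some y else lastnd.tag t⟩
        let acc' := acc ++ subw.dropLast ++ [lastnd']
        if g i y then
          rloopF a g r ℓ k1 k2 subR subU i kctx fuel (insert y C) star' (r i y) acc' (j + 1)
            (if j + 1 ≤ k1 i then insert y C else Crec) st₁
        else
          some (acc',
            if (∀ t, i < t → t ≤ ℓ → kctx t = k1 t) ∧ (∃ t, i < t ∧ t ≤ ℓ ∧ k1 t < k2 t) then
              fun t => if t = i then some Crec else st₁ t
            else st₁)
      | _, _ => none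

/-- The relaxed extended walk `walk^{k¹,k²}(s', i, kctx)`, with fuel. -/
def rwalkF (a : Fin n → Fin m) (g : ℕ → Dom m → Bool) (r : ℕ → Dom m → Fin n)
    (ℓ : ℕ) (k1 k2 : ℕ → ℕ) :
    ℕ → ℕ → (ℕ → ℕ) → Store m → Fin n → Option (List (Node m n) × Store m)
  | _, 0, _, st, s' => some ([⟨s', fun _ => none⟩], st)
  | 0, _ + 1, _, _, _ => none
  | fuel + 1, i + 1, kctx, st, s' =>
    let C₀ : Finset (Dom m) :=
      if (∀ t, i + 1 < t → t ≤ ℓ → kctx t = k2 t) ∧ (∃ t, i + 1 < t ∧ t ≤ ℓ ∧ k1 t < k2 t) ∧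
          0 < k2 (i + 1) then (st (i + 1)).getD ∅
      else ∅
    rloopF a g r ℓ k1 k2 (fun k' st' sj => rwalkF a g r ℓ k1 k2 fuel i k' st' sj)
      (fun sj => ((walkF a g r fuel i sj).bind List.getLast?).map Node.vtx)
      (i + 1) kctx (fuel + 1) C₀ false s' [] 0 C₀ st

/-- The relaxed extended walk `w^{k¹,k²} = walk^{k¹,k²}(s, ℓ, (0,…,0))`:
`some w` iff it terminates, with output `w`. -/
def extRWalk (a : Fin n → Fin m) (g : ℕ → Dom m → Bool) (r : ℕ → Dom m → Fin n)
    (ℓ : ℕ) (k1 k2 : ℕ → ℕ) (s : Fin n) : Option (List (Node m n)) :=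
  if h : ∃ fuel, (rwalkF a g r ℓ k1 k2 fuel ℓ (fun _ => 0) (fun _ => none) s).isSome = true
  then (rwalkF a g r ℓ k1 k2 (Nat.find h) ℓ (fun _ => 0) (fun _ => none) s).map Prod.fst
  else none

/-! ### Positions, levels and the dependency tree -/

/-- The vertex `w_μ` (positions are 1-indexed; `μ = 0` is the root, which has no vertex). -/
def vtxAt (w : List (Node m n)) (μ : ℕ) : Option (Fin n) :=
  if μ = 0 then none else (w[μ - 1]?).map Node.vtx

/-- The value `a_i(μ)`. -/
def tagAt (w : List (Node m n)) (μ i : ℕ) : Option (Dom m) :=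
  if μ = 0 then none else (w[μ - 1]?).bind fun nd => nd.tag i

/-- `level(μ)`: the least `i ∈ [1, ℓ]` with `g_i(a_i(μ)) = 1`, and `ℓ + 1` if there is
none (in particular for the root `0` and for the final position of the walk). -/
def levelOf (ℓ : ℕ) (g : ℕ → Dom m → Bool) (w : List (Node m n)) (μ : ℕ) : ℕ :=
  if h : ∃ i, (1 ≤ i ∧ i ≤ ℓ) ∧ ∃ y, tagAt w μ i = some y ∧ g i y = true then Nat.find h
  else ℓ + 1

/-- `a(μ) = a_{level(μ)}(μ)`. -/
def aAt (ℓ : ℕ) (g : ℕ → Dom m → Bool) (w : List (Node m n)) (μ : ℕ) : Option (Dom m) :=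
  tagAt w μ (levelOf ℓ g w μ)

/-- `next(μ) = w_{μ+1}`. -/
def nextAt (w : List (Node m n)) (μ : ℕ) : Option (Fin n) := vtxAt w (μ + 1)

/-- `ν` lies on the root-to-`μ` path of the dependency tree with level function `lvl`. -/
def OnPath (lvl : ℕ → ℕ) (ν μ : ℕ) : Prop :=
  ν ≤ μ ∧ ∀ ρ, ν < ρ → ρ ≤ μ → lvl ρ ≤ lvl ν

/-- The number of level-`i` nodes on the root-to-`μ` path. -/
def idxAt (lvl : ℕ → ℕ) (μ i : ℕ) : ℕ :=
  ((Finset.range (μ + 1)).filter fun ν => OnPath lvl ν μ ∧ lvl ν = i).card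

/-- Node `μ` of the dependency tree (of a walk of length `wlen`) has index `k`
(only the components `k_i` with `1 ≤ i ≤ ℓ` are relevant). -/
def HasIdx (ℓ : ℕ) (lvl : ℕ → ℕ) (wlen μ : ℕ) (k : ℕ → ℕ) : Prop :=
  μ ≤ wlen ∧ ∀ i, 1 ≤ i → i ≤ ℓ → idxAt lvl μ i = k i

/-- There is a collision between the root-to-`μ₁` path and the root-to-`μ₂` path. -/
def Collision (lvl : ℕ → ℕ) (av : ℕ → Option (Dom m)) (μ₁ μ₂ : ℕ) : Prop :=
  ∃ α β, OnPath lvl α μ₁ ∧ ¬ OnPath lvl α μ₂ ∧ OnPath lvl β μ₂ ∧ ¬ OnPath lvl β μ₁ ∧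
    lvl α = lvl β ∧ av α = av β

/-! ### The pseudorandom hash function and reachability -/

/-- The pseudorandom hash function of the family `H_{ℓ,m,n}` built from `g, r`
(`none` plays the role of `⋆`). -/
def hashOf (ℓ : ℕ) (g : ℕ → Dom m → Bool) (r : ℕ → Dom m → Fin n) (x : Fin m) :
    Option (Fin n) :=
  if h : ∃ i, (1 ≤ i ∧ i ≤ ℓ) ∧ g i (Sum.inl x) = true then some (r (Nat.find h) (Sum.inl x))
  else none

/-- `v ∈ f*_{a,h}(s)`: `v` is reachable from `s` in the digraph `G_{a,h}`. -/
def Reaches (a : Fin n → Fin m) (hsh : Fin m → Option (Fin n)) (s v : Fin n) : Prop :=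
  Relation.ReflTransGen (fun x y => hsh (a x) = some y) s v

/-- The second frequency moment `F₂(a)`. -/
def F2 (a : Fin n → Fin m) : ℕ :=
  ∑ i : Fin n, ∑ j : Fin n, if a i = a j then 1 else 0

/-! ### Index-vector combinatorics -/

/-- Equality of index vectors (only components `1..ℓ` matter). -/
def IdxEq (ℓ : ℕ) (k k' : ℕ → ℕ) : Prop := ∀ t, 1 ≤ t → t ≤ ℓ → k t = k' t

/-- The ordering `k < k'` on index vectors. -/
def IdxLt (ℓ : ℕ) (k k' : ℕ → ℕ) : Prop :=
  ∃ i, 1 ≤ i ∧ i ≤ ℓ ∧ k i < k' i ∧ ∀ t, i < t → t ≤ ℓ → k t = k' t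

/-- `k'` is an ancestor (index) of `k`. -/
def IsAncestorIdx (ℓ : ℕ) (k' k : ℕ → ℕ) : Prop :=
  ¬ IdxEq ℓ k' k ∧ ∃ i, 1 ≤ i ∧ i ≤ ℓ ∧ (∀ t, i < t → t ≤ ℓ → k' t = k t) ∧
    0 < k' i ∧ k' i ≤ k i ∧ ∀ t, 1 ≤ t → t < i → k' t = 0

/-- `k' ∈ P^k`: `k'` is `k` itself or an ancestor of `k`. -/
def InP (ℓ : ℕ) (k' k : ℕ → ℕ) : Prop := IdxEq ℓ k' k ∨ IsAncestorIdx ℓ k' k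

/-- `k'` is a level-`i` index. -/
def IsLevelIdx (ℓ i : ℕ) (k' : ℕ → ℕ) : Prop := 0 < k' i ∧ ∀ t, 1 ≤ t → t < i → k' t = 0

/-- A canonical index vector: zero outside `[1, ℓ]`. -/
def Canon (ℓ : ℕ) (k' : ℕ → ℕ) : Prop := ∀ t, t = 0 ∨ ℓ < t → k' t = 0

/-- `K_i`: the number of distinct level-`i` indices in `⋃_{k ∈ ks} P^k`. -/
def Kcount (ℓ : ℕ) (ks : List (ℕ → ℕ)) (i : ℕ) : ℕ :=
  Set.ncard {k' : ℕ → ℕ | Canon ℓ k' ∧ IsLevelIdx ℓ i k' ∧ ∃ k ∈ ks, InP ℓ k' k}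

/-- The rank (`1`-based) of the level-`i` index `κ` among the level-`i` indices of
`⋃_{k ∈ ks} P^k`, in increasing `<`-order. -/
def rankOf (ℓ : ℕ) (ks : List (ℕ → ℕ)) (i : ℕ) (κ : ℕ → ℕ) : ℕ :=
  Set.ncard {κ' : ℕ → ℕ |
    Canon ℓ κ' ∧ IsLevelIdx ℓ i κ' ∧ (∃ k ∈ ks, InP ℓ κ' k) ∧ IdxLt ℓ κ' κ} + 1

/-- Interpret a vector `k ∈ ℕ^ℓ` as a (canonical) index vector on levels `1..ℓ`. -/
def toIdx (ℓ : ℕ) (k : Fin ℓ → ℕ) : ℕ → ℕ :=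
  fun t => if h : 1 ≤ t ∧ t ≤ ℓ then k ⟨t - 1, by omega⟩ else 0

/-- The truncation `k^{i,j} = (0, …, 0, j, k_{i+1}, …, k_ℓ)`, indexing `μ^k_{i,j}`. -/
def truncIdx (k : ℕ → ℕ) (i j : ℕ) : ℕ → ℕ :=
  fun t => if t = i then j else if i < t then k t else 0

/-! ### The probability space -/

/-- The sample space: the functions `g_i`, `r_i` (on the star-extended domain) together
with the starting vertex `s`. -/
abbrev Sample (m n : ℕ) : Type := (ℕ → Dom m → Bool) × (ℕ → Dom m → Fin n) × Fin n

def gOf (ω : Sample m n) : ℕ → Dom m → Bool := ω.1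

def rOf (ω : Sample m n) : ℕ → Dom m → Fin n := ω.2.1

def sOf (ω : Sample m n) : Fin n := ω.2.2

/-- `P` is an admissible joint distribution of `(g, r, s)`: the starting vertex `s` is
uniform on `[n]`; each `g_i` (resp. `r_i`) is `τ`-wise independent and uniform on the
base domain, with fully independent uniform values on the stars; and all of
`g_1, …, g_ℓ, r_1, …, r_ℓ, s` are mutually independent.  This is expressed by requiring
that every admissible cylinder event has the correct product probability. -/
def GoodMeasure (ℓ τ : ℕ) (P : Measure (Sample m n)) : Prop :=
  ∀ (S T : Finset (ℕ × Dom m)) (vg : ℕ × Dom m → Bool) (vr : ℕ × Dom m → Fin n)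
    (s₀ : Fin n),
    (∀ q ∈ S, 1 ≤ q.1 ∧ q.1 ≤ ℓ) → (∀ q ∈ T, 1 ≤ q.1 ∧ q.1 ≤ ℓ) →
    (∀ i, (S.filter fun q => q.1 = i ∧ q.2.isLeft = true).card ≤ τ) →
    (∀ i, (T.filter fun q => q.1 = i ∧ q.2.isLeft = true).card ≤ τ) →
    P {ω : Sample m n |
        (∀ q ∈ S, gOf ω q.1 q.2 = vg q) ∧ (∀ q ∈ T, rOf ω q.1 q.2 = vr q) ∧ sOf ω = s₀} =
      (2 : ℝ≥0∞)⁻¹ ^ S.card * ((n : ℝ≥0∞))⁻¹ ^ T.card * (n : ℝ≥0∞)⁻¹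

/-! ### Events for the dependency tree -/

/-- The node indexed by `κ` exists in the dependency tree of the extended walk and its
`next`-value is `v`. -/
def NodeP (a : Fin n → Fin m) (ℓ : ℕ) (κ : ℕ → ℕ) (v : Fin n) (ω : Sample m n) : Prop :=
  ∃ w, extWalk a (gOf ω) (rOf ω) ℓ (sOf ω) = some w ∧
    ∃ μ, HasIdx ℓ (levelOf ℓ (gOf ω) w) w.length μ κ ∧ nextAt w μ = some v

/-- The event `F^{k,b}_{I,J}` (for the extended walk). -/
def Fev (a : Fin n → Fin m) (ℓ : ℕ) (k : ℕ → ℕ) (b : ℕ → ℕ → Fin n) (I J : ℕ)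
    (ω : Sample m n) : Prop :=
  (∀ i j, I < i → i ≤ ℓ → 1 ≤ j → j ≤ k i → NodeP a ℓ (truncIdx k i j) (b i j) ω) ∧
  ∀ j, 1 ≤ j → j ≤ J → NodeP a ℓ (truncIdx k I j) (b I j) ω

/-- The event fixing `g_1, …, g_{i-1}` and `r_1, …, r_{i-1}`. -/
def FixEv (i : ℕ) (gf : ℕ → Dom m → Bool) (rf : ℕ → Dom m → Fin n) : Set (Sample m n) :=
  {ω | ∀ t, 1 ≤ t → t < i → gOf ω t = gf t ∧ rOf ω t = rf t}

/-- The node indexed by `κ` exists in the dependency tree of the relaxed extended walk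
`w^{k¹,k²}` and its `next`-value is `v`. -/
def RNodeP (a : Fin n → Fin m) (ℓ : ℕ) (k1 k2 κ : ℕ → ℕ) (v : Fin n) (ω : Sample m n) :
    Prop :=
  ∃ w, extRWalk a (gOf ω) (rOf ω) ℓ k1 k2 (sOf ω) = some w ∧
    ∃ μ, HasIdx ℓ (levelOf ℓ (gOf ω) w) w.length μ κ ∧ nextAt w μ = some v

/-- The event `F^{K,b}_{I,J}` for `K = {k¹, k²}` (for the relaxed extended walk):
for every level `i ∈ [1, ℓ]` and every level-`i` index `κ` of `P^{k¹} ∪ P^{k²}` of rank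
`j`, if `i > I`, or `i = I` and `j ≤ J`, then `μ^K_{i,j}` exists and `next(μ^K_{i,j}) = b_{i,j}`. -/
def FevK (a : Fin n → Fin m) (ℓ : ℕ) (k1 k2 : ℕ → ℕ) (b : ℕ → ℕ → Fin n) (I J : ℕ)
    (ω : Sample m n) : Prop :=
  ∀ i κ, 1 ≤ i → i ≤ ℓ → Canon ℓ κ → IsLevelIdx ℓ i κ → (InP ℓ κ k1 ∨ InP ℓ κ k2) →
    (I < i ∨ (i = I ∧ rankOf ℓ [k1, k2] i κ ≤ J)) →
    RNodeP a ℓ k1 k2 κ (b i (rankOf ℓ [k1, k2] i κ)) ω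


/-! ### Combinatorics of the dependency tree -/

theorem onPath_refl (lvl : ℕ → ℕ) (μ : ℕ) : OnPath lvl μ μ :=
  ⟨le_refl _, fun ρ h1 h2 => by omega⟩

theorem onPath_trans {lvl : ℕ → ℕ} {x y z : ℕ} (h1 : OnPath lvl x y) (h2 : OnPath lvl y z) :
    OnPath lvl x z := by
  refine ⟨h1.1.trans h2.1, fun ρ hρ hz => ?_⟩
  by_cases h : ρ ≤ y
  · exact h1.2 ρ hρ h
  · have h3 := h2.2 ρ (by omega) hz
    by_cases hxy : x = y
    · subst hxy; exact h3
    · have := h1.2 y (by have := h1.1; omega) (le_refl _)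
      omega

theorem onPath_pred {lvl : ℕ → ℕ} {x y : ℕ} (hy : 1 ≤ y) (h1 : OnPath lvl x (y - 1))
    (h : lvl y ≤ lvl x) : OnPath lvl x y := by
  refine ⟨by have := h1.1; omega, fun ρ hρ hz => ?_⟩
  by_cases hρy : ρ = y
  · subst hρy; exact h
  · exact h1.2 ρ hρ (by omega)

theorem onPath_succ (lvl : ℕ → ℕ) (ν μ : ℕ) :
    OnPath lvl ν (μ + 1) ↔ ν = μ + 1 ∨ (OnPath lvl ν μ ∧ lvl (μ + 1) ≤ lvl ν) := by
  constructor
  · intro h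
    by_cases hν : ν = μ + 1
    · exact Or.inl hν
    · have := h.1
      exact Or.inr ⟨⟨by omega, fun ρ h1 h2 => h.2 ρ h1 (by omega)⟩,
        h.2 (μ + 1) (by omega) le_rfl⟩
  · rintro (rfl | ⟨h, h'⟩)
    · exact onPath_refl _ _
    · exact onPath_pred (by omega) (by simpa using h) h'

theorem idxAt_succ (lvl : ℕ → ℕ) (μ t : ℕ) :
    idxAt lvl (μ + 1) t =
      if t = lvl (μ + 1) then idxAt lvl μ t + 1
      else if lvl (μ + 1) < t then idxAt lvl μ t else 0 := by
  unfold idxAt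
  rw [Finset.range_add_one (n := μ + 1), Finset.filter_insert]
  have hc : ∀ ν ∈ Finset.range (μ + 1),
      (OnPath lvl ν (μ + 1) ∧ lvl ν = t) ↔
        ((OnPath lvl ν μ ∧ lvl ν = t) ∧ lvl (μ + 1) ≤ t) := by
    intro ν hν
    rw [Finset.mem_range] at hν
    rw [onPath_succ]
    constructor
    · rintro ⟨h1 | h1, h2⟩
      · omega
      · exact ⟨⟨h1.1, h2⟩, h2 ▸ h1.2⟩
    · rintro ⟨⟨h1, h2⟩, h3⟩
      exact ⟨Or.inr ⟨h1, h2 ▸ h3⟩, h2⟩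
  rw [Finset.filter_congr hc]
  by_cases h1 : t = lvl (μ + 1)
  · subst h1
    simp only [onPath_refl, and_self, if_true, le_refl, and_true]
    rw [Finset.card_insert_of_notMem]
    simp
  · have h1' : ¬ lvl (μ + 1) = t := fun h => h1 h.symm
    simp only [h1, h1', and_false, if_false]
    by_cases h2 : lvl (μ + 1) < t
    · simp [h2, h2.le]
    · have h3 : ¬ lvl (μ + 1) ≤ t := by omega
      simp [h2, h3]

theorem idxAt_zero {lvl : ℕ → ℕ} {ℓ : ℕ} (h0 : lvl 0 = ℓ + 1) (t : ℕ) (ht : t ≤ ℓ) :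
    idxAt lvl 0 t = 0 := by
  unfold idxAt
  rw [Finset.card_eq_zero, Finset.filter_eq_empty_iff]
  intro ν hν
  simp at hν
  subst hν
  rintro ⟨_, h⟩
  omega

/-- The index above level `i` does not change along nodes of level at most `i`. -/
theorem idxAt_const {lvl : ℕ → ℕ} {ν ρ i t : ℕ} (hle : ν ≤ ρ)
    (h : ∀ σ, ν < σ → σ ≤ ρ → lvl σ ≤ i) (ht : i < t) : idxAt lvl ρ t = idxAt lvl ν t := by
  induction ρ, hle using Nat.le_induction with
  | base => rfl
  | succ ρ hρ ih =>
    rw [idxAt_succ]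
    have h1 := h (ρ + 1) (by omega) le_rfl
    rw [if_neg (by omega), if_pos (by omega)]
    exact ih (fun σ h1 h2 => h σ h1 (by omega))

/-- Fundamental order lemma: indices increase along the walk. -/
theorem idx_order {lvl : ℕ → ℕ} {ν ρ : ℕ} (hlt : ν < ρ) :
    ∃ L, (∀ σ, ν < σ → σ ≤ ρ → lvl σ ≤ L) ∧ (∃ σ, ν < σ ∧ σ ≤ ρ ∧ lvl σ = L) ∧
      idxAt lvl ν L < idxAt lvl ρ L ∧ ∀ t, L < t → idxAt lvl ν t = idxAt lvl ρ t := by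
  induction ρ, hlt using Nat.le_induction with
  | base =>
    refine ⟨lvl (ν + 1), ?_, ⟨ν + 1, by omega, by omega, rfl⟩, ?_, ?_⟩
    · intro σ h1 h2
      have : σ = ν + 1 := by omega
      rw [this]
    · simp [idxAt_succ]
    · intro t ht
      rw [idxAt_succ, if_neg (by omega), if_pos ht]
  | succ ρ hρ ih =>
    obtain ⟨L, h1, ⟨σ, h2, h3, h4⟩, h5, h6⟩ := ih
    by_cases hL : lvl (ρ + 1) ≤ L
    · refine ⟨L, ?_, ⟨σ, h2, by omega, h4⟩, ?_, ?_⟩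
      · intro σ' h7 h8
        by_cases h9 : σ' = ρ + 1
        · rw [h9]; exact hL
        · exact h1 σ' h7 (by omega)
      · rw [idxAt_succ]
        split_ifs <;> omega
      · intro t ht
        rw [idxAt_succ, if_neg (by omega), if_pos (by omega)]
        exact h6 t ht
    · refine ⟨lvl (ρ + 1), ?_, ⟨ρ + 1, by omega, le_rfl, rfl⟩, ?_, ?_⟩
      · intro σ' h7 h8
        by_cases h9 : σ' = ρ + 1
        · rw [h9]
        · have := h1 σ' h7 (by omega)
          omega
      · rw [idxAt_succ, if_pos rfl, h6 _ (by omega)]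
        omega
      · intro t ht
        rw [idxAt_succ, if_neg (by omega), if_pos ht]
        exact h6 t (by omega)

/-- If the indices strictly above `i` agree, the nodes in between have level at most `i`. -/
theorem lvl_between {lvl : ℕ → ℕ} {ℓ ν ρ i : ℕ} (hM : ∀ σ, ν < σ → σ ≤ ρ → lvl σ ≤ ℓ)
    (h : ∀ t, i < t → t ≤ ℓ → idxAt lvl ν t = idxAt lvl ρ t) :
    ∀ σ, ν < σ → σ ≤ ρ → lvl σ ≤ i := by
  intro σ h1 h2
  obtain ⟨L, h3, ⟨σ', h4, h5, h6⟩, h7, -⟩ := idx_order (lvl := lvl) (lt_of_lt_of_le h1 h2)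
  have h8 := hM σ' h4 h5
  by_contra hc
  have h9 := h3 σ h1 h2
  have := h (L) (by omega) (by omega)
  omega

/-- If the index of `ν` is at most that of `ρ` lexicographically (with witness), then `ν ≤ ρ`. -/
theorem le_of_idx_lt {lvl : ℕ → ℕ} {ℓ ν ρ i : ℕ} (hi : i ≤ ℓ)
    (hM : ∀ σ, 1 ≤ σ → σ ≤ ν → lvl σ ≤ ℓ)
    (h : ∀ t, i < t → t ≤ ℓ → idxAt lvl ν t = idxAt lvl ρ t)
    (h' : idxAt lvl ν i < idxAt lvl ρ i) : ν < ρ := by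
  by_contra hc
  rcases Nat.lt_or_ge ρ ν with h1 | h1
  · obtain ⟨L, h3, ⟨σ', h4, h5, h6⟩, h7, h8⟩ := idx_order (lvl := lvl) h1
    have h9 := hM σ' (by omega) h5
    rcases lt_trichotomy L i with h10 | h10 | h10
    · have := h8 i h10; omega
    · subst h10; omega
    · have := h L h10 (by omega); omega
  · have : ν = ρ := by omega
    subst this; omega

theorem idx_le {lvl : ℕ → ℕ} {ν ρ i : ℕ} (hle : ν ≤ ρ) 
    (h : ∀ σ, ν < σ → σ ≤ ρ → lvl σ ≤ i) : idxAt lvl ν i ≤ idxAt lvl ρ i := by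
  induction ρ, hle using Nat.le_induction with
  | base => rfl
  | succ ρ hρ ih =>
    rw [idxAt_succ]
    have h1 := h (ρ + 1) (by omega) le_rfl
    have := ih (fun σ h1 h2 => h σ h1 (by omega))
    split_ifs <;> omega

theorem idx_pos {lvl : ℕ → ℕ} {ν : ℕ} (h : 1 ≤ ν) : 1 ≤ idxAt lvl ν (lvl ν) := by
  obtain ⟨μ, rfl⟩ : ∃ μ, ν = μ + 1 := ⟨ν - 1, by omega⟩
  rw [idxAt_succ, if_pos rfl]; omega

theorem idx_below {lvl : ℕ → ℕ} {ν t : ℕ} (h : 1 ≤ ν) (ht : t < lvl ν) : idxAt lvl ν t = 0 := by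
  obtain ⟨μ, rfl⟩ : ∃ μ, ν = μ + 1 := ⟨ν - 1, by omega⟩
  rw [idxAt_succ, if_neg (by omega), if_neg (by omega)]

/-! ### Abstract final argument -/

def InB (lvl : ℕ → ℕ) (μ₁ μ₂ ν : ℕ) : Prop := OnPath lvl ν μ₁ ∨ OnPath lvl ν μ₂

def InU (lvl : ℕ → ℕ) (μ₁ μ₂ α β ν : ℕ) : Prop :=
  InB lvl μ₁ μ₂ ν ∨ OnPath lvl ν (α - 1) ∨ OnPath lvl ν (β - 1)

def GoodPair {m : ℕ} (ax : ℕ → Option (Fin m)) (M α β : ℕ) : Prop :=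
  1 ≤ α ∧ α ≤ M ∧ 1 ≤ β ∧ β ≤ M ∧ α ≠ β ∧ ∃ b, ax α = some b ∧ ax β = some b

def InjFrom {m : ℕ} (lvl : ℕ → ℕ) (av : ℕ → Option (Dom m)) (U : ℕ → Prop) (i : ℕ) : Prop :=
  ∀ x y, U x → U y → i ≤ lvl x → lvl x = lvl y → av x = av y → x = y

theorem final_step {m : ℕ} (lvl : ℕ → ℕ) (av : ℕ → Option (Dom m)) (ax : ℕ → Option (Fin m))
    (ℓ μ₁ μ₂ : ℕ) (h0 : lvl 0 = ℓ + 1) (hμ : μ₁ ≤ μ₂)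
    (hav : ∀ ν, 1 ≤ ν → ν ≤ μ₂ → ∃ y, av ν = some y)
    (H1 : ∀ ρ ν μ, 1 ≤ ρ → 1 ≤ ν → μ ≤ μ₂ → OnPath lvl ρ μ → OnPath lvl ν μ → lvl ρ = lvl ν →
      av ρ = av ν → ρ = ν)
    (H2 : ∀ i, InjFrom lvl av (InB lvl μ₁ μ₂) i)
    (H3 : ∀ ν b, 1 ≤ ν → ν ≤ μ₂ → av ν = some (Sum.inl b) → ax ν = some b)
    (H4 : ∀ ν s, 1 ≤ ν → ν ≤ μ₂ → av ν = some (Sum.inr s) → ∃ ρ ν0 s', 1 ≤ ρ ∧ ρ < ν0 ∧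
      OnPath lvl ν0 ν ∧ lvl ν0 = lvl ν ∧ lvl ρ = lvl ν ∧ av ν0 = some (Sum.inr s') ∧
      (∃ b, ax ρ = some b ∧ ax ν0 = some b) ∧ (OnPath lvl ρ ν0 ∨ OnPath lvl ρ μ₁))
    (i : ℕ) (hi : i ≤ ℓ) (c : ℕ) :
    ∀ α β, GoodPair ax μ₂ α β → InjFrom lvl av (InU lvl μ₁ μ₂ α β) (i + 1) →
      ((Finset.range (μ₂ + 1)).filter fun ν =>
        lvl ν = i ∧ InU lvl μ₁ μ₂ α β ν ∧ ¬ InB lvl μ₁ μ₂ ν).card = c →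
      ∃ α' β', GoodPair ax μ₂ α' β' ∧ InjFrom lvl av (InU lvl μ₁ μ₂ α' β') i := by
  induction c using Nat.strong_induction_on with
  | _ c IH =>
  intro α β hp hinj hc
  obtain ⟨hα1, hα2, hβ1, hβ2, hne, b, hb1, hb2⟩ := hp
  have hUle : ∀ x, InU lvl μ₁ μ₂ α β x → x ≤ μ₂ := by
    rintro x ((h | h) | h | h) <;> have := h.1 <;> omega
  have hUtr : ∀ x y, OnPath lvl x y → InU lvl μ₁ μ₂ α β y → InU lvl μ₁ μ₂ α β x := by
    rintro x y hxy ((h | h) | h | h)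
    · exact Or.inl (Or.inl (onPath_trans hxy h))
    · exact Or.inl (Or.inr (onPath_trans hxy h))
    · exact Or.inr (Or.inl (onPath_trans hxy h))
    · exact Or.inr (Or.inr (onPath_trans hxy h))
  have hBtr : ∀ x y, OnPath lvl x y → InB lvl μ₁ μ₂ y → InB lvl μ₁ μ₂ x := by
    rintro x y hxy (h | h)
    · exact (Or.inl (onPath_trans hxy h))
    · exact (Or.inr (onPath_trans hxy h))
  have hpos : ∀ x, lvl x = i → 1 ≤ x := by
    intro x hx
    rcases Nat.eq_zero_or_pos x with h | h
    · subst h; omega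
    · exact h
  -- the replacement step
  have repl : ∀ γ δ, lvl γ = i → lvl δ = i → InU lvl μ₁ μ₂ α β γ → InU lvl μ₁ μ₂ α β δ →
      γ ≠ δ → ¬ InB lvl μ₁ μ₂ γ → ¬ OnPath lvl γ (δ - 1) →
      (∃ b, ax γ = some b ∧ ax δ = some b) →
      ∃ α' β', GoodPair ax μ₂ α' β' ∧ InjFrom lvl av (InU lvl μ₁ μ₂ α' β') i := by
    intro γ δ hγ hδ hUγ hUδ hγδ hB hnp hax
    have hγ1 := hpos γ hγ
    have hδ1 := hpos δ hδ
    have hsub : ∀ x, i ≤ lvl x → InU lvl μ₁ μ₂ γ δ x → InU lvl μ₁ μ₂ α β x := by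
      rintro x hx (h | h | h)
      · exact Or.inl h
      · exact hUtr _ _ (onPath_pred hγ1 h (by omega)) hUγ
      · exact hUtr _ _ (onPath_pred hδ1 h (by omega)) hUδ
    have hγn : ¬ InU lvl μ₁ μ₂ γ δ γ := by
      rintro (h | h | h)
      · exact hB h
      · have := h.1; omega
      · exact hnp h
    refine IH _ ?_ γ δ ⟨hγ1, hUle _ hUγ, hδ1, hUle _ hUδ, hγδ, hax⟩ ?_ rfl
    · rw [← hc]
      apply Finset.card_lt_card
      rw [Finset.ssubset_iff_of_subset]
      · refine ⟨γ, ?_, ?_⟩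
        · simp only [Finset.mem_filter, Finset.mem_range]
          exact ⟨by have := hUle _ hUγ; omega, hγ, hUγ, hB⟩
        · simp only [Finset.mem_filter, Finset.mem_range]
          rintro ⟨_, _, h, _⟩
          exact hγn h
      · intro x
        simp only [Finset.mem_filter, Finset.mem_range]
        rintro ⟨h1, h2, h3, h4⟩
        exact ⟨h1, h2, hsub x h2.ge h3, h4⟩
    · intro x y hx hy h1 h2 h3
      exact hinj x y (hsub x (by omega) hx) (hsub y (by omega) hy) h1 h2 h3
  by_cases hdone : InjFrom lvl av (InU lvl μ₁ μ₂ α β) i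
  · exact ⟨α, β, ⟨hα1, hα2, hβ1, hβ2, hne, b, hb1, hb2⟩, hdone⟩
  by_cases hstB : ∃ ν s, InB lvl μ₁ μ₂ ν ∧ lvl ν = i ∧ av ν = some (Sum.inr s)
  · obtain ⟨ν, s, hν, hνi, hs⟩ := hstB
    obtain ⟨ρ, ν0, s', h1, h2, h3, h4, h5, -, h6, h7⟩ :=
      H4 ν s (hpos _ hνi) (hUle _ (Or.inl hν)) hs
    have hB0 : InB lvl μ₁ μ₂ ν0 := hBtr _ _ h3 hν
    have hBρ : InB lvl μ₁ μ₂ ρ := by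
      rcases h7 with h | h
      · exact hBtr _ _ h hB0
      · exact Or.inl h
    refine ⟨ρ, ν0, ⟨h1, hUle _ (Or.inl hBρ), by omega, hUle _ (Or.inl hB0), by omega, h6⟩, ?_⟩
    have hsub : ∀ x, i ≤ lvl x → InU lvl μ₁ μ₂ ρ ν0 x → InB lvl μ₁ μ₂ x := by
      rintro x hx (h | h | h)
      · exact h
      · exact hBtr _ _ (onPath_pred h1 h (by omega)) hBρ
      · exact hBtr _ _ (onPath_pred (by omega) h (by omega)) hB0
    intro x y hx hy hx1 hx2 hx3
    exact H2 i x y (hsub x hx1 hx) (hsub y (by omega) hy) hx1 hx2 hx3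
  by_cases hstU : ∃ ν s, InU lvl μ₁ μ₂ α β ν ∧ lvl ν = i ∧ av ν = some (Sum.inr s)
  · obtain ⟨ν, s, hν, hνi, hs⟩ := hstU
    obtain ⟨ρ, ν0, s', h1, h2, h3, h4, h5, hs', ⟨b', h6, h6'⟩, h7⟩ :=
      H4 ν s (hpos _ hνi) (hUle _ hν) hs
    have hU0 := hUtr _ _ h3 hν
    have hUρ : InU lvl μ₁ μ₂ α β ρ := by
      rcases h7 with h | h
      · exact hUtr _ _ h hU0
      · exact Or.inl (Or.inl h)
    refine repl ν0 ρ (by omega) (by omega) hU0 hUρ (by omega) ?_ ?_ ⟨b', h6', h6⟩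
    · intro hB
      exact hstB ⟨ν0, s', hB, by omega, hs'⟩
    · intro h
      have := h.1; omega
  · have hcol : ∃ γ δ, InU lvl μ₁ μ₂ α β γ ∧ InU lvl μ₁ μ₂ α β δ ∧ lvl γ = i ∧ lvl δ = i ∧
        av γ = av δ ∧ γ ≠ δ := by
      by_contra hno
      apply hdone
      intro x y hx hy h1 h2 h3
      by_contra hxy
      by_cases hxi : lvl x = i
      · exact hno ⟨x, y, hx, hy, hxi, by omega, h3, hxy⟩
      · exact hxy (hinj x y hx hy (by omega) h2 h3)
    obtain ⟨γ, δ, hγ, hδ, hγi, hδi, hgd, hne'⟩ := hcol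
    obtain ⟨y, hy⟩ := hav γ (hpos _ hγi) (hUle _ hγ)
    rcases y with y | y
    · have e1 := H3 γ y (hpos _ hγi) (hUle _ hγ) hy
      have e2 := H3 δ y (hpos _ hδi) (hUle _ hδ) (hgd ▸ hy)
      have key : ∀ γ δ, lvl γ = i → lvl δ = i → InU lvl μ₁ μ₂ α β δ → av γ = av δ → γ ≠ δ →
          ¬ OnPath lvl γ (δ - 1) := by
        intro γ δ h1 h2 h3 h4 h5 h6
        have h7 := onPath_pred (hpos _ h2) h6 (by omega)
        exact h5 (H1 γ δ δ (hpos _ h1) (hpos _ h2) (hUle _ h3) h7 (onPath_refl _ _) (by omega) h4)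
      by_cases hBγ : InB lvl μ₁ μ₂ γ
      · have hBδ : ¬ InB lvl μ₁ μ₂ δ := by
          intro hBδ
          exact hne' (H2 i γ δ hBγ hBδ hγi.ge (by omega) hgd)
        exact repl δ γ hδi hγi hδ hγ hne'.symm hBδ (key δ γ hδi hγi hγ hgd.symm hne'.symm)
          ⟨y, e2, e1⟩
      · exact repl γ δ hγi hδi hγ hδ hne' hBγ (key γ δ hγi hδi hδ hgd hne') ⟨y, e1, e2⟩
    · exact absurd ⟨γ, y, hγ, hγi, hy⟩ hstU

theorem final_all {m : ℕ} (lvl : ℕ → ℕ) (av : ℕ → Option (Dom m)) (ax : ℕ → Option (Fin m))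
    (ℓ μ₁ μ₂ : ℕ) (h0 : lvl 0 = ℓ + 1) (hμ : μ₁ ≤ μ₂)
    (hlv : ∀ ν, 1 ≤ ν → ν ≤ μ₂ → lvl ν ≤ ℓ)
    (hav : ∀ ν, 1 ≤ ν → ν ≤ μ₂ → ∃ y, av ν = some y)
    (H1 : ∀ ρ ν μ, 1 ≤ ρ → 1 ≤ ν → μ ≤ μ₂ → OnPath lvl ρ μ → OnPath lvl ν μ → lvl ρ = lvl ν →
      av ρ = av ν → ρ = ν)
    (H2 : ∀ i, InjFrom lvl av (InB lvl μ₁ μ₂) i)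
    (H3 : ∀ ν b, 1 ≤ ν → ν ≤ μ₂ → av ν = some (Sum.inl b) → ax ν = some b)
    (H4 : ∀ ν s, 1 ≤ ν → ν ≤ μ₂ → av ν = some (Sum.inr s) → ∃ ρ ν0 s', 1 ≤ ρ ∧ ρ < ν0 ∧
      OnPath lvl ν0 ν ∧ lvl ν0 = lvl ν ∧ lvl ρ = lvl ν ∧ av ν0 = some (Sum.inr s') ∧
      (∃ b, ax ρ = some b ∧ ax ν0 = some b) ∧ (OnPath lvl ρ ν0 ∨ OnPath lvl ρ μ₁))
    (α β : ℕ) (hp : GoodPair ax μ₂ α β) :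
    ∃ α' β', GoodPair ax μ₂ α' β' ∧ InjFrom lvl av (InU lvl μ₁ μ₂ α' β') 0 := by
  have key : ∀ d, d ≤ ℓ + 1 → ∃ α' β', GoodPair ax μ₂ α' β' ∧
      InjFrom lvl av (InU lvl μ₁ μ₂ α' β') (ℓ + 1 - d) := by
    intro d
    induction d with
    | zero =>
      intro _
      refine ⟨α, β, hp, ?_⟩
      obtain ⟨hα1, hα2, hβ1, hβ2, -⟩ := hp
      have hz : ∀ x, InU lvl μ₁ μ₂ α β x → ℓ + 1 ≤ lvl x → x = 0 := by
        intro x hx hl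
        have : x ≤ μ₂ := by rcases hx with (h | h) | h | h <;> have := h.1 <;> omega
        by_contra hne
        have := hlv x (by omega) this
        omega
      intro x y hx hy h1 h2 _
      rw [hz x hx (by omega), hz y hy (by omega)]
    | succ d ih =>
      intro hd
      obtain ⟨α', β', h1, h2⟩ := ih (by omega)
      refine final_step lvl av ax ℓ μ₁ μ₂ h0 hμ hav H1 H2 H3 H4 (ℓ + 1 - (d + 1)) (by omega) _
        α' β' h1 ?_ rfl
      have : ℓ + 1 - (d + 1) + 1 = ℓ + 1 - d := by omega
      rw [this]; exact h2
  simpa using key (ℓ + 1) le_rfl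

/-! ### Specification of good nodes -/

def Rel (ℓ : ℕ) (k1 k2 : ℕ → ℕ) (i : ℕ) (κ : ℕ → ℕ) : Prop :=
  (∀ t, i < t → t ≤ ℓ → κ t = k2 t) ∧ (∃ t, i < t ∧ t ≤ ℓ ∧ k1 t < k2 t) ∧ 0 < k2 i

def Agree (ℓ i : ℕ) (κ κ' : ℕ → ℕ) : Prop := ∀ t, i < t → t ≤ ℓ → κ t = κ' t

def InS (ℓ : ℕ) (k1 k2 : ℕ → ℕ) (lvl : ℕ → ℕ) (i : ℕ) (κ : ℕ → ℕ) (ρ : ℕ) : Prop :=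
  lvl ρ = i ∧ (Agree ℓ i (idxAt lvl ρ) κ ∨
    (Rel ℓ k1 k2 i κ ∧ Agree ℓ i (idxAt lvl ρ) k1 ∧ idxAt lvl ρ i ≤ k1 i))

def Bad (ℓ : ℕ) (k2 : ℕ → ℕ) (lvl : ℕ → ℕ) (ν : ℕ) : Prop :=
  idxAt lvl ν (lvl ν) = k2 (lvl ν) + 1 ∧ Agree ℓ (lvl ν) (idxAt lvl ν) k2

def Good {m : ℕ} (ℓ : ℕ) (k1 k2 : ℕ → ℕ) (lvl : ℕ → ℕ) (av : ℕ → Option (Dom m))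
    (ax : ℕ → Option (Fin m)) (ν : ℕ) : Prop :=
  1 ≤ lvl ν ∧ lvl ν ≤ ℓ ∧ ∃ y x, av ν = some y ∧ ax ν = some x ∧
    (∀ ρ, 1 ≤ ρ → ρ < ν → InS ℓ k1 k2 lvl (lvl ν) (idxAt lvl ν) ρ → av ρ ≠ some y) ∧
    (∀ b, y = Sum.inl b → Bad ℓ k2 lvl ν ∨ b = x) ∧
    (∀ s, y = Sum.inr s → Bad ℓ k2 lvl ν ∨
      (∃ ρ s', 1 ≤ ρ ∧ ρ < ν ∧ lvl ρ = lvl ν ∧ Agree ℓ (lvl ν) (idxAt lvl ρ) (idxAt lvl ν) ∧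
        av ρ = some (Sum.inr s')) ∨
      ∃ ρ, 1 ≤ ρ ∧ ρ < ν ∧ InS ℓ k1 k2 lvl (lvl ν) (idxAt lvl ν) ρ ∧ av ρ = some (Sum.inl x))

theorem agree_onPath {lvl : ℕ → ℕ} {ℓ ρ μ : ℕ} (h : OnPath lvl ρ μ) :
    Agree ℓ (lvl ρ) (idxAt lvl ρ) (idxAt lvl μ) := by
  intro t h1 h2
  exact (idxAt_const h.1 h.2 h1).symm

theorem good_final {m : ℕ} (ℓ : ℕ) (k1 k2 : ℕ → ℕ) (lvl : ℕ → ℕ) (av : ℕ → Option (Dom m))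
    (ax : ℕ → Option (Fin m)) (M μ₁ μ₂ : ℕ) (h0 : lvl 0 = ℓ + 1)
    (hG : ∀ ν, 1 ≤ ν → ν ≤ M → Good ℓ k1 k2 lvl av ax ν) (hlt : IdxLt ℓ k1 k2)
    (hM1 : μ₁ ≤ M) (hM2 : μ₂ ≤ M)
    (hi1 : ∀ t, 1 ≤ t → t ≤ ℓ → idxAt lvl μ₁ t = k1 t)
    (hi2 : ∀ t, 1 ≤ t → t ≤ ℓ → idxAt lvl μ₂ t = k2 t)
    (α β : ℕ) (hp : GoodPair ax μ₂ α β) :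
    ∃ α' β', GoodPair ax μ₂ α' β' ∧ InjFrom lvl av (InU lvl μ₁ μ₂ α' β') 0 := by
  have hl1 : ∀ ν, 1 ≤ ν → ν ≤ M → 1 ≤ lvl ν := fun ν h1 h2 => (hG ν h1 h2).1
  have hl2 : ∀ ν, 1 ≤ ν → ν ≤ M → lvl ν ≤ ℓ := fun ν h1 h2 => (hG ν h1 h2).2.1
  obtain ⟨d, hd1, hd2, hd3, hd4⟩ := hlt
  have hμ : μ₁ < μ₂ := by
    refine le_of_idx_lt hd2 (fun σ h1 h2 => hl2 σ h1 (by omega)) (i := d) ?_ ?_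
    · intro t h1 h2
      rw [hi1 t (by omega) h2, hi2 t (by omega) h2, hd4 t h1 h2]
    · rw [hi1 d hd1 hd2, hi2 d hd1 hd2]; exact hd3
  have hbad : ∀ ν, 1 ≤ ν → ν ≤ μ₂ → ¬ Bad ℓ k2 lvl ν := by
    intro ν h1 h2 hb
    have hl := hl1 ν h1 (by omega)
    have hl' := hl2 ν h1 (by omega)
    have : μ₂ < ν := by
      refine le_of_idx_lt hl' (fun σ h1 h2 => hl2 σ h1 (by omega)) (i := lvl ν) ?_ ?_
      · intro t h3 h4
        rw [hi2 t (by omega) h4, hb.2 t h3 h4]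
      · rw [hb.1, hi2 _ hl hl']; omega
    omega
  -- distinct tags in the set `S`
  have hS : ∀ ν ρ, 1 ≤ ν → ν ≤ M → 1 ≤ ρ → ρ < ν →
      InS ℓ k1 k2 lvl (lvl ν) (idxAt lvl ν) ρ → av ρ ≠ av ν := by
    intro ν ρ h1 h2 h3 h4 h5 h6
    obtain ⟨-, -, y, x, hy, -, hn, -⟩ := hG ν h1 h2
    exact hn ρ h3 h4 h5 (h6.trans hy)
  have hGrp : ∀ ν ρ, 1 ≤ ν → ν ≤ M → 1 ≤ ρ → ρ ≤ M → lvl ρ = lvl ν →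
      Agree ℓ (lvl ν) (idxAt lvl ρ) (idxAt lvl ν) → av ρ = av ν → ρ = ν := by
    intro ν ρ h1 h2 h3 h4 h5 h6 h7
    rcases lt_trichotomy ρ ν with h | h | h
    · exact absurd h7 (hS ν ρ h1 h2 h3 h ⟨h5, Or.inl h6⟩)
    · exact h
    · refine absurd h7.symm (hS ρ ν h3 h4 h1 h ⟨h5.symm, Or.inl ?_⟩)
      intro t ht1 ht2
      exact (h6 t (by omega) ht2).symm
  have H1 : ∀ ρ ν μ, 1 ≤ ρ → 1 ≤ ν → μ ≤ M → OnPath lvl ρ μ → OnPath lvl ν μ →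
      lvl ρ = lvl ν → av ρ = av ν → ρ = ν := by
    intro ρ ν μ h1 h2 h3 h4 h5 h6 h7
    refine hGrp ν ρ h2 (h5.1.trans h3) h1 (h4.1.trans h3) h6 ?_ h7
    intro t ht1 ht2
    rw [agree_onPath (ℓ := ℓ) h4 t (by omega) ht2, agree_onPath (ℓ := ℓ) h5 t ht1 ht2]
  have H2' : ∀ ρ ν, 1 ≤ ρ → 1 ≤ ν → OnPath lvl ρ μ₁ → OnPath lvl ν μ₂ → lvl ρ = lvl ν →
      av ρ = av ν → ρ = ν := by
    intro ρ ν h1 h2 h3 h4 h5 h6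
    have hρM := h3.1.trans hM1
    have hνM := h4.1.trans hM2
    have hl := hl1 ν h2 hνM
    have hl' := hl2 ν h2 hνM
    have aρ : Agree ℓ (lvl ν) (idxAt lvl ρ) k1 := by
      intro t ht1 ht2
      rw [agree_onPath (ℓ := ℓ) h3 t (by omega) ht2, hi1 t (by omega) ht2]
    have aν : Agree ℓ (lvl ν) (idxAt lvl ν) k2 := by
      intro t ht1 ht2
      rw [agree_onPath (ℓ := ℓ) h4 t (by omega) ht2, hi2 t (by omega) ht2]
    by_cases hdl : d ≤ lvl ν
    · refine hGrp ν ρ h2 hνM h1 hρM h5 ?_ h6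
      intro t ht1 ht2
      rw [aρ t ht1 ht2, aν t ht1 ht2, hd4 t (by omega) ht2]
    · have hρν : ρ < ν := by
        refine le_of_idx_lt hd2 (fun σ h1 h2 => hl2 σ h1 (by omega)) (i := d) ?_ ?_
        · intro t ht1 ht2
          rw [aρ t (by omega) ht2, aν t (by omega) ht2, hd4 t ht1 ht2]
        · rw [aρ d (by omega) hd2, aν d (by omega) hd2]; exact hd3
      refine absurd h6 (hS ν ρ h2 hνM h1 hρν ⟨h5, Or.inr ⟨⟨aν, ⟨d, by omega, hd2, hd3⟩, ?_⟩, aρ, ?_⟩⟩)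
      · have e1 := idx_pos (lvl := lvl) h2
        have e2 := idx_le h4.1 h4.2
        rw [hi2 _ hl hl'] at e2
        omega
      · have e2 := idx_le h3.1 h3.2
        rw [h5, hi1 _ hl hl'] at e2
        exact e2
  have H2 : ∀ i, InjFrom lvl av (InB lvl μ₁ μ₂) i := by
    intro i x y hx hy _ hl ha
    have hz : ∀ z, InB lvl μ₁ μ₂ z → lvl z = ℓ + 1 → z = 0 := by
      intro z hz hlz
      have : z ≤ M := by rcases hz with h | h <;> have := h.1 <;> omega
      by_contra hne
      have := hl2 z (by omega) this
      omega
    rcases Nat.eq_zero_or_pos x with h | hx0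
    · subst h
      exact (hz y hy (by omega)).symm
    rcases Nat.eq_zero_or_pos y with h | hy0
    · subst h
      exact hz x hx (by omega)
    rcases hx with hx | hx <;> rcases hy with hy | hy
    · exact H1 x y μ₁ hx0 hy0 hM1 hx hy hl ha
    · exact H2' x y hx0 hy0 hx hy hl ha
    · exact (H2' y x hy0 hx0 hy hx hl.symm ha.symm).symm
    · exact H1 x y μ₂ hx0 hy0 hM2 hx hy hl ha
  have H3 : ∀ ν b, 1 ≤ ν → ν ≤ μ₂ → av ν = some (Sum.inl b) → ax ν = some b := by
    intro ν b h1 h2 h3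
    obtain ⟨-, -, y, x, hy, hx, -, hb, -⟩ := hG ν h1 (by omega)
    have : y = Sum.inl b := by rw [hy] at h3; exact Option.some.inj h3
    rcases hb b this with h | h
    · exact absurd h (hbad ν h1 h2)
    · rw [hx, h]
  have hpath : ∀ ρ μ, 1 ≤ ρ → ρ ≤ μ → μ ≤ M → Agree ℓ (lvl ρ) (idxAt lvl ρ) (idxAt lvl μ) →
      OnPath lvl ρ μ := by
    intro ρ μ h1 h2 h3 h4
    exact ⟨h2, lvl_between (fun σ h5 h6 => hl2 σ (by omega) (by omega)) h4⟩
  have H4 : ∀ ν s, 1 ≤ ν → ν ≤ μ₂ → av ν = some (Sum.inr s) → ∃ ρ ν0 s', 1 ≤ ρ ∧ ρ < ν0 ∧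
      OnPath lvl ν0 ν ∧ lvl ν0 = lvl ν ∧ lvl ρ = lvl ν ∧ av ν0 = some (Sum.inr s') ∧
      (∃ b, ax ρ = some b ∧ ax ν0 = some b) ∧ (OnPath lvl ρ ν0 ∨ OnPath lvl ρ μ₁) := by
    intro ν
    induction ν using Nat.strong_induction_on with
    | _ ν IH =>
    intro s h1 h2 h3
    obtain ⟨-, -, y, x, hy, hx, -, -, hs⟩ := hG ν h1 (by omega)
    have : y = Sum.inr s := by rw [hy] at h3; exact Option.some.inj h3
    rcases hs s this with h | ⟨ρ, s', e1, e2, e3, e4, e5⟩ | ⟨ρ, e1, e2, ⟨e3, e4⟩, e5⟩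
    · exact absurd h (hbad ν h1 h2)
    · obtain ⟨ρ', ν0, s'', f1, f2, f3, f4, f5, f6, f7, f8⟩ := IH ρ e2 s' e1 (by omega) e5
      have : OnPath lvl ρ ν := hpath ρ ν e1 e2.le (by omega) (by rw [e3]; exact e4)
      exact ⟨ρ', ν0, s'', f1, f2, onPath_trans f3 this, by omega, by omega, f6, f7, f8⟩
    · refine ⟨ρ, ν, s, e1, e2, onPath_refl _ _, rfl, e3, h3, ⟨x, H3 ρ x e1 (by omega) e5, hx⟩, ?_⟩
      rcases e4 with e4 | ⟨-, e6, e7⟩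
      · exact Or.inl (hpath ρ ν e1 e2.le (by omega) (by rw [e3]; exact e4))
      · right
        have hlp := hl1 ν h1 (by omega)
        have hlp' := hl2 ν h1 (by omega)
        have hag : Agree ℓ (lvl ρ) (idxAt lvl ρ) (idxAt lvl μ₁) := by
          intro t ht1 ht2
          rw [e6 t (by omega) ht2, hi1 t (by omega) ht2]
        refine hpath ρ μ₁ e1 ?_ hM1 hag
        by_contra hgt
        have hb := lvl_between (lvl := lvl) (ℓ := ℓ) (ν := μ₁) (ρ := ρ) (i := lvl ρ)
          (fun σ h5 h6 => hl2 σ (by omega) (by omega)) (fun t ht1 ht2 => (hag t ht1 ht2).symm)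
        obtain ⟨L, g1, ⟨σ, g2, g3, g4⟩, g5, g6⟩ := idx_order (lvl := lvl) (ν := μ₁) (ρ := ρ) (by omega)
        have g7 := g1 ρ (by omega) le_rfl
        have g8 := hb σ g2 g3
        have : L = lvl ν := by omega
        subst this
        rw [hi1 _ hlp hlp'] at g5
        omega
  refine final_all lvl av ax ℓ μ₁ μ₂ h0 hμ.le (fun ν h1 h2 => hl2 ν h1 (by omega)) ?_
    (fun ρ ν μ h1 h2 h3 => H1 ρ ν μ h1 h2 (by omega)) H2 H3 H4 α β hp
  intro ν h1 h2
  obtain ⟨-, -, y, x, hy, -⟩ := hG ν h1 (by omega)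
  exact ⟨y, hy⟩

/-! ### Unfolding the loops -/

/-- The value `y` computed in a loop iteration. -/
def pickY (C : Finset (Dom m)) (star : Bool) (b : Fin m) : Dom m :=
  if star = false ∧ (Sum.inl b : Dom m) ∉ C then Sum.inl b else Sum.inr (freshStar C)

def pickStar (C : Finset (Dom m)) (star : Bool) (b : Fin m) : Bool :=
  if star = false ∧ (Sum.inl b : Dom m) ∉ C then false else true

def setTag (nd : Node m n) (i : ℕ) (y : Dom m) : Node m n :=
  ⟨nd.vtx, fun t => if t = i then some y else nd.tag t⟩

def stepCtx (i j : ℕ) (kctx : ℕ → ℕ) : ℕ → ℕ :=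
  fun t => if t = i then j else if i < t then kctx t else 0

theorem pickY_notMem (C : Finset (Dom m)) (star : Bool) (b : Fin m) : pickY C star b ∉ C := by
  unfold pickY
  split_ifs with h
  · exact h.2
  · exact Nat.find_spec (freshStar_exists C)

def recStore (ℓ : ℕ) (k1 k2 : ℕ → ℕ) (i : ℕ) (kctx : ℕ → ℕ) (Crec : Finset (Dom m))
    (st₁ : Store m) : Store m :=
  if (∀ t, i < t → t ≤ ℓ → kctx t = k1 t) ∧ (∃ t, i < t ∧ t ≤ ℓ ∧ k1 t < k2 t) then
    fun t => if t = i then some Crec else st₁ t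
  else st₁

theorem loopF_step (a : Fin n → Fin m) (g : ℕ → Dom m → Bool) (r : ℕ → Dom m → Fin n)
    (sub : Fin n → Option (List (Node m n))) (i fuel : ℕ) (C : Finset (Dom m)) (star : Bool)
    (sj : Fin n) (acc W0 : List (Node m n)) (nd : Node m n) (h : sub sj = some (W0 ++ [nd])) :
    loopF a g r sub i (fuel + 1) C star sj acc =
      if g i (pickY C star (a nd.vtx)) then
        loopF a g r sub i fuel (insert (pickY C star (a nd.vtx)) C) (pickStar C star (a nd.vtx))
          (r i (pickY C star (a nd.vtx))) (acc ++ W0 ++ [setTag nd i (pickY C star (a nd.vtx))])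
      else some (acc ++ W0 ++ [setTag nd i (pickY C star (a nd.vtx))]) := by
  rw [loopF, h]
  simp [pickY, pickStar, setTag]

theorem rloopF_step {a : Fin n → Fin m} {g : ℕ → Dom m → Bool} {r : ℕ → Dom m → Fin n}
    {ℓ : ℕ} {k1 k2 : ℕ → ℕ}
    {subR : (ℕ → ℕ) → Store m → Fin n → Option (List (Node m n) × Store m)}
    {subU : Fin n → Option (Fin n)} {i : ℕ} {kctx : ℕ → ℕ} {fuel : ℕ} {C : Finset (Dom m)}
    {star : Bool} {sj : Fin n} {acc : List (Node m n)} {j : ℕ} {Crec : Finset (Dom m)}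
    {st : Store m} {W : List (Node m n)} {st' : Store m}
    (h : rloopF a g r ℓ k1 k2 subR subU i kctx (fuel + 1) C star sj acc j Crec st
      = some (W, st')) :
    ∃ W0 nd st₁ xv, subR (stepCtx i j kctx) st sj = some (W0 ++ [nd], st₁) ∧
      subU sj = some xv ∧
      ((g i (pickY C star (a xv)) = true ∧
        rloopF a g r ℓ k1 k2 subR subU i kctx fuel (insert (pickY C star (a xv)) C)
          (pickStar C star (a xv)) (r i (pickY C star (a xv)))
          (acc ++ W0 ++ [setTag nd i (pickY C star (a xv))]) (j + 1)
          (if j + 1 ≤ k1 i then insert (pickY C star (a xv)) C else Crec) st₁ = some (W, st')) ∨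
       (g i (pickY C star (a xv)) = false ∧
        W = acc ++ W0 ++ [setTag nd i (pickY C star (a xv))] ∧
        st' = recStore ℓ k1 k2 i kctx Crec st₁)) := by
  rw [rloopF] at h
  change (match subR (stepCtx i j kctx) st sj with
    | none => none
    | some (subw, st₁) => _) = _ at h
  cases hR : subR (stepCtx i j kctx) st sj with
  | none => rw [hR] at h; simp at h
  | some p =>
    obtain ⟨subw, st₁⟩ := p
    rw [hR] at h
    simp only at h
    cases hU : subU sj with
    | none => rw [hU] at h; simp at h
    | some xv =>
      cases hL : subw.getLast? with
      | none => rw [hU, hL] at h; simp at h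
      | some nd =>
        have hsub : subw = subw.dropLast ++ [nd] := by
          rw [List.dropLast_append_getLast? _ hL]
        rw [hU, hL] at h
        simp only at h
        refine ⟨subw.dropLast, nd, st₁, xv, by rw [← hsub], rfl, ?_⟩
        change (if g i (pickY C star (a xv)) = true then
          rloopF a g r ℓ k1 k2 subR subU i kctx fuel (insert (pickY C star (a xv)) C)
          (pickStar C star (a xv)) (r i (pickY C star (a xv)))
          (acc ++ subw.dropLast ++ [setTag nd i (pickY C star (a xv))]) (j + 1)
          (if j + 1 ≤ k1 i then insert (pickY C star (a xv)) C else Crec) st₁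
          else some (acc ++ subw.dropLast ++ [setTag nd i (pickY C star (a xv))],
            recStore ℓ k1 k2 i kctx Crec st₁)) = _ at h
        by_cases hg : g i (pickY C star (a xv)) = true
        · rw [if_pos hg] at h
          exact Or.inl ⟨hg, h⟩
        · rw [if_neg hg] at h
          simp only [Option.some.injEq, Prod.mk.injEq] at h
          exact Or.inr ⟨by simpa using hg, h.1.symm, h.2.symm⟩

/-- Shape of the loop output. -/
theorem rloopF_shape {a : Fin n → Fin m} {g : ℕ → Dom m → Bool} {r : ℕ → Dom m → Fin n}
    {ℓ : ℕ} {k1 k2 : ℕ → ℕ}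
    {subR : (ℕ → ℕ) → Store m → Fin n → Option (List (Node m n) × Store m)}
    {subU : Fin n → Option (Fin n)} {i : ℕ} {kctx : ℕ → ℕ}
    (hsub : ∀ k st s W nd st', subR k st s = some (W ++ [nd], st') →
      ∀ t, 1 ≤ t → t ≤ i → ∀ y, nd.tag t = some y → g t y = false) (fuel : ℕ) :
    ∀ {C : Finset (Dom m)} {star : Bool} {sj : Fin n} {acc : List (Node m n)} {j : ℕ}
      {Crec : Finset (Dom m)} {st : Store m} {W : List (Node m n)} {st' : Store m},
    rloopF a g r ℓ k1 k2 subR subU (i + 1) kctx fuel C star sj acc j Crec st = some (W, st') →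
    ∃ W0 nd, W = W0 ++ [nd] ∧ acc <+: W0 ∧
      ∀ t, 1 ≤ t → t ≤ i + 1 → ∀ y, nd.tag t = some y → g t y = false := by
  induction fuel with
  | zero => intro C star sj acc j Crec st W st' h; simp [rloopF] at h
  | succ fuel ih =>
    intro C star sj acc j Crec st W st' h
    obtain ⟨W0, nd, st₁, xv, h1, -, ⟨-, h3⟩ | ⟨h2, h3, -⟩⟩ := rloopF_step h
    · obtain ⟨W1, nd', e1, e2, e3⟩ := ih h3
      refine ⟨W1, nd', e1, ?_, e3⟩
      refine List.IsPrefix.trans ?_ e2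
      rw [List.append_assoc]
      exact List.prefix_append _ _
    · refine ⟨acc ++ W0, _, h3, List.prefix_append _ _, ?_⟩
      intro t ht1 ht2 y hy
      simp only [setTag] at hy
      by_cases hti : t = i + 1
      · rw [if_pos hti] at hy
        rw [hti, ← Option.some.inj hy]; exact h2
      · rw [if_neg hti] at hy
        exact hsub _ _ _ _ _ _ h1 t ht1 (by omega) y hy

theorem rwalkF_shape {a : Fin n → Fin m} {g : ℕ → Dom m → Bool} {r : ℕ → Dom m → Fin n}
    {ℓ : ℕ} {k1 k2 : ℕ → ℕ} (i : ℕ) : ∀ (fuel : ℕ) (k : ℕ → ℕ) (st : Store m) (s : Fin n)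
      (W : List (Node m n)) (st' : Store m),
      rwalkF a g r ℓ k1 k2 fuel i k st s = some (W, st') →
      ∃ W0 nd, W = W0 ++ [nd] ∧ ∀ t, 1 ≤ t → t ≤ i → ∀ y, nd.tag t = some y → g t y = false := by
  induction i with
  | zero =>
    intro fuel k st s W st' h
    have : W = [] ++ [⟨s, fun _ => none⟩] := by
      cases fuel <;> simp [rwalkF] at h <;> simp [h.1]
    exact ⟨_, _, this, fun t h1 h2 => by omega⟩
  | succ i ih =>
    intro fuel k st s W st' h
    cases fuel with
    | zero => simp [rwalkF] at h
    | succ fuel =>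
      rw [rwalkF] at h
      obtain ⟨W0, nd, e1, -, e3⟩ := rloopF_shape (i := i) (by
        intro k st s W nd st' h t h1 h2 y hy
        obtain ⟨W1, nd1, f1, f2⟩ := ih fuel k st s _ st' h
        have := List.append_inj' f1 rfl
        have h3 : nd = nd1 := by simpa using this.2
        subst h3
        exact f2 t h1 h2 y hy) (fuel + 1) h
      exact ⟨W0, nd, e1, e3⟩

/-- Off the path to `k²`, the relaxed walk coincides with the extended walk. -/
theorem rloopF_eq {a : Fin n → Fin m} {g : ℕ → Dom m → Bool} {r : ℕ → Dom m → Fin n}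
    {ℓ : ℕ} {k1 k2 : ℕ → ℕ}
    {subR : (ℕ → ℕ) → Store m → Fin n → Option (List (Node m n) × Store m)}
    {sub : Fin n → Option (List (Node m n))} {i : ℕ} {kctx : ℕ → ℕ}
    (hsub : ∀ j st s W st', subR (stepCtx i j kctx) st s = some (W, st') → sub s = some W)
    (fuel : ℕ) :
    ∀ {C : Finset (Dom m)} {star : Bool} {sj : Fin n} {acc : List (Node m n)} {j : ℕ}
      {Crec : Finset (Dom m)} {st : Store m} {W : List (Node m n)} {st' : Store m},
    rloopF a g r ℓ k1 k2 subR (fun sj => ((sub sj).bind List.getLast?).map Node.vtx)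
      i kctx fuel C star sj acc j Crec st = some (W, st') →
    loopF a g r sub i fuel C star sj acc = some W := by
  induction fuel with
  | zero => intro C star sj acc j Crec st W st' h; simp [rloopF] at h
  | succ fuel ih =>
    intro C star sj acc j Crec st W st' h
    obtain ⟨W0, nd, st₁, xv, h1, hU, h3⟩ := rloopF_step h
    have hs := hsub _ _ _ _ _ h1
    have hx : xv = nd.vtx := by
      simp [hs] at hU
      exact hU.symm
    subst hx
    rw [loopF_step _ _ _ _ _ _ _ _ _ _ _ _ hs]
    rcases h3 with ⟨h2, h3⟩ | ⟨h2, h3, -⟩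
    · rw [if_pos h2]
      exact ih h3
    · rw [if_neg (by simp [h2]), h3]

theorem rwalkF_eq {a : Fin n → Fin m} {g : ℕ → Dom m → Bool} {r : ℕ → Dom m → Fin n}
    {ℓ : ℕ} {k1 k2 : ℕ → ℕ} (i : ℕ) : ∀ (fuel : ℕ) (k : ℕ → ℕ) (st : Store m) (s : Fin n)
      (W : List (Node m n)) (st' : Store m),
      rwalkF a g r ℓ k1 k2 fuel i k st s = some (W, st') → ¬ Agree ℓ i k k2 →
      walkF a g r fuel i s = some W := by
  induction i with
  | zero =>
    intro fuel k st s W st' h _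
    cases fuel <;> simp [rwalkF] at h <;> simp [walkF, h.1]
  | succ i ih =>
    intro fuel k st s W st' h hk
    cases fuel with
    | zero => simp [rwalkF] at h
    | succ fuel =>
      rw [rwalkF] at h
      rw [walkF]
      have hC : ¬ ((∀ t, i + 1 < t → t ≤ ℓ → k t = k2 t) ∧
          (∃ t, i + 1 < t ∧ t ≤ ℓ ∧ k1 t < k2 t) ∧ 0 < k2 (i + 1)) := fun h => hk h.1
      rw [if_neg hC] at h
      refine rloopF_eq ?_ _ h
      intro j st s W st' h'
      refine ih fuel _ st s W st' h' ?_
      intro hag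
      apply hk
      intro t h1 h2
      have := hag t (by omega) h2
      unfold stepCtx at this
      rwa [if_neg (by omega), if_pos h1] at this

/-! ### Invariants of the relaxed walk -/

def Div (ℓ : ℕ) (k1 k2 : ℕ → ℕ) (i : ℕ) : Prop := ∃ t, i < t ∧ t ≤ ℓ ∧ k1 t < k2 t

def TagS {m : ℕ} (ℓ : ℕ) (k1 lvl : ℕ → ℕ) (av : ℕ → Option (Dom m)) (C : Finset (Dom m))
    (i N : ℕ) : Prop :=
  ∀ y, y ∈ C ↔ ∃ ρ, 1 ≤ ρ ∧ ρ ≤ N ∧ lvl ρ = i ∧ Agree ℓ i (idxAt lvl ρ) k1 ∧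
    idxAt lvl ρ i ≤ k1 i ∧ av ρ = some y

structure Pre {m : ℕ} (ℓ : ℕ) (k1 k2 lvl : ℕ → ℕ) (av : ℕ → Option (Dom m))
    (ax : ℕ → Option (Fin m)) (N i : ℕ) (kctx : ℕ → ℕ) (st : Store m) : Prop where
  idx : ∀ t, 1 ≤ t → t ≤ ℓ → idxAt lvl N t = kctx t
  zero : ∀ t, 1 ≤ t → t ≤ i → kctx t = 0
  good : ∀ ν, 1 ≤ ν → ν ≤ N → Good ℓ k1 k2 lvl av ax ν
  store : ∀ i', 1 ≤ i' → i' ≤ ℓ → Div ℓ k1 k2 i' → ¬ Agree ℓ i' (idxAt lvl N) k1 →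
    TagS ℓ k1 lvl av ((st i').getD ∅) i' N

structure Post {m : ℕ} (ℓ : ℕ) (k1 k2 lvl : ℕ → ℕ) (av : ℕ → Option (Dom m))
    (ax : ℕ → Option (Fin m)) (N N' i : ℕ) (st : Store m) : Prop where
  le : N ≤ N'
  lv : ∀ ν, N < ν → ν ≤ N' → lvl ν ≤ i
  good : ∀ ν, 1 ≤ ν → ν ≤ N' → Good ℓ k1 k2 lvl av ax ν
  store : ∀ i', 1 ≤ i' → i' ≤ ℓ → Div ℓ k1 k2 i' → (¬ Agree ℓ i' (idxAt lvl N') k1 ∨ i' ≤ i) →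
    TagS ℓ k1 lvl av ((st i').getD ∅) i' N'

structure LoopInv {m : ℕ} (ℓ : ℕ) (k1 k2 lvl : ℕ → ℕ) (av : ℕ → Option (Dom m))
    (ax : ℕ → Option (Fin m)) (N0 I : ℕ) (kctx : ℕ → ℕ) (N : ℕ) (C : Finset (Dom m))
    (star : Bool) (j : ℕ) (Crec : Finset (Dom m)) (st : Store m) : Prop where
  le : N0 ≤ N
  lv : ∀ ν, N0 < ν → ν ≤ N → lvl ν ≤ I
  good : ∀ ν, 1 ≤ ν → ν ≤ N → Good ℓ k1 k2 lvl av ax ν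
  ag : Agree ℓ I (idxAt lvl N) kctx
  hj : idxAt lvl N I = j
  lo : ∀ t, 1 ≤ t → t < I → idxAt lvl N t = 0
  hC : ∀ y, y ∈ C ↔ ∃ ρ, 1 ≤ ρ ∧ ρ ≤ N ∧ InS ℓ k1 k2 lvl I kctx ρ ∧ av ρ = some y
  hstar : star = true → ∃ ρ s', 1 ≤ ρ ∧ ρ ≤ N ∧ lvl ρ = I ∧ Agree ℓ I (idxAt lvl ρ) kctx ∧
    av ρ = some (Sum.inr s')
  hrec : Agree ℓ I kctx k1 → Div ℓ k1 k2 I → TagS ℓ k1 lvl av Crec I N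
  store : ∀ i', 1 ≤ i' → i' ≤ ℓ → Div ℓ k1 k2 i' → ¬ Agree ℓ i' (idxAt lvl N) k1 →
    TagS ℓ k1 lvl av ((st i').getD ∅) i' N

section Abstract

variable {ℓ : ℕ} {k1 k2 lvl : ℕ → ℕ} {av : ℕ → Option (Dom m)} {ax : ℕ → Option (Fin m)}

theorem LoopInv.pre {N0 i : ℕ} {kctx : ℕ → ℕ} {N : ℕ} {C : Finset (Dom m)}
    {star : Bool} {j : ℕ} {Crec : Finset (Dom m)} {st : Store m}
    (h : LoopInv ℓ k1 k2 lvl av ax N0 (i + 1) kctx N C star j Crec st) :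
    Pre ℓ k1 k2 lvl av ax N i (stepCtx (i + 1) j kctx) st where
  idx := by
    intro t h1 h2
    unfold stepCtx
    split_ifs with h3 h4
    · rw [h3]; exact h.hj
    · exact h.ag t h4 h2
    · exact h.lo t h1 (by omega)
  zero := by
    intro t h1 h2
    unfold stepCtx
    rw [if_neg (by omega), if_neg (by omega)]
  good := h.good
  store := h.store

theorem not_agree_of_rel {i : ℕ} {κ : ℕ → ℕ} (h2 : Agree ℓ i κ k2) (hd : Div ℓ k1 k2 i) :
    ¬ Agree ℓ i κ k1 := by
  intro h1
  obtain ⟨t, e1, e2, e3⟩ := hd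
  have := h1 t e1 e2
  have := h2 t e1 e2
  omega

theorem Pre.loopInv {N I : ℕ} {kctx : ℕ → ℕ} {st : Store m} (hI1 : 1 ≤ I) (hI : I ≤ ℓ)
    (h : Pre ℓ k1 k2 lvl av ax N I kctx st) (C0 : Finset (Dom m))
    (hC0 : C0 = if Rel ℓ k1 k2 I kctx then (st I).getD ∅ else ∅) :
    LoopInv ℓ k1 k2 lvl av ax N I kctx N C0 false 0 C0 st := by
  have hl2 : ∀ ν, 1 ≤ ν → ν ≤ N → lvl ν ≤ ℓ := fun ν h1 h2 => (h.good ν h1 h2).2.1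
  have hag : Agree ℓ I (idxAt lvl N) kctx := fun t h1 h2 => h.idx t (by omega) h2
  have hnone : ∀ ρ, 1 ≤ ρ → ρ ≤ N → lvl ρ = I → ¬ Agree ℓ I (idxAt lvl ρ) kctx := by
    intro ρ h1 h2 h3 h4
    have hb := lvl_between (lvl := lvl) (ℓ := ℓ) (ν := ρ) (ρ := N) (i := I)
      (fun σ h5 h6 => hl2 σ (by omega) h6)
      (fun t ht1 ht2 => (h4 t ht1 ht2).trans (hag t ht1 ht2).symm)
    have e1 := idx_le h2 hb
    have e2 := idx_pos (lvl := lvl) h1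
    rw [h3] at e2
    rw [h.idx I hI1 hI, h.zero I hI1 le_rfl] at e1
    omega
  refine ⟨le_rfl, fun ν h1 h2 => by omega, h.good, hag, ?_, ?_, ?_, by simp, ?_, h.store⟩
  · rw [h.idx I hI1 hI, h.zero I hI1 le_rfl]
  · intro t h1 h2
    rw [h.idx t h1 (by omega), h.zero t h1 h2.le]
  · intro y
    by_cases hR : Rel ℓ k1 k2 I kctx
    · rw [hC0, if_pos hR]
      have hna : ¬ Agree ℓ I (idxAt lvl N) k1 :=
        not_agree_of_rel (fun t h1 h2 => (hag t h1 h2).trans (hR.1 t h1 h2)) hR.2.1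
      rw [h.store I hI1 hI hR.2.1 hna y]
      constructor
      · rintro ⟨ρ, e1, e2, e3, e4, e5, e6⟩
        exact ⟨ρ, e1, e2, ⟨e3, Or.inr ⟨hR, e4, e5⟩⟩, e6⟩
      · rintro ⟨ρ, e1, e2, ⟨e3, e4 | ⟨-, e4, e5⟩⟩, e6⟩
        · exact absurd e4 (hnone ρ e1 e2 e3)
        · exact ⟨ρ, e1, e2, e3, e4, e5, e6⟩
    · rw [hC0, if_neg hR]
      constructor
      · intro hy; simp at hy
      · rintro ⟨ρ, e1, e2, ⟨e3, e4 | ⟨e4, -⟩⟩, -⟩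
        · exact absurd e4 (hnone ρ e1 e2 e3)
        · exact absurd e4 hR
  · intro h1 hd y
    have hR : ¬ Rel ℓ k1 k2 I kctx := fun hR => not_agree_of_rel hR.1 hd h1
    rw [hC0, if_neg hR]
    constructor
    · intro hy; simp at hy
    · rintro ⟨ρ, e1, e2, e3, e4, e5, -⟩
      exact absurd (fun t ht1 ht2 => (e4 t ht1 ht2).trans (h1 t ht1 ht2).symm)
        (hnone ρ e1 e2 e3)

/-- The loop invariant also characterizes `C` and `Crec` after the recursive call. -/
theorem LoopInv.after {N0 i : ℕ} {kctx : ℕ → ℕ} {N N' : ℕ} {C : Finset (Dom m)}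
    {star : Bool} {j : ℕ} {Crec : Finset (Dom m)} {st st₁ : Store m}
    (h : LoopInv ℓ k1 k2 lvl av ax N0 (i + 1) kctx N C star j Crec st)
    (hp : Post ℓ k1 k2 lvl av ax N N' i st₁) :
    (∀ t, i < t → idxAt lvl N' t = idxAt lvl N t) ∧
    (∀ y, y ∈ C ↔ ∃ ρ, 1 ≤ ρ ∧ ρ ≤ N' ∧ InS ℓ k1 k2 lvl (i + 1) kctx ρ ∧ av ρ = some y) ∧
    (Agree ℓ (i + 1) kctx k1 → Div ℓ k1 k2 (i + 1) → TagS ℓ k1 lvl av Crec (i + 1) N') := by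
  refine ⟨fun t ht => idxAt_const hp.le hp.lv ht, ?_, ?_⟩
  · intro y
    rw [h.hC y]
    constructor
    · rintro ⟨ρ, e1, e2, e3⟩
      exact ⟨ρ, e1, e2.trans hp.le, e3⟩
    · rintro ⟨ρ, e1, e2, e3, e4⟩
      refine ⟨ρ, e1, ?_, e3, e4⟩
      by_contra hc
      have := hp.lv ρ (by omega) e2
      have := e3.1
      omega
  · intro h1 h2 y
    rw [h.hrec h1 h2 y]
    constructor
    · rintro ⟨ρ, e1, e2, e3⟩
      exact ⟨ρ, e1, e2.trans hp.le, e3⟩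
    · rintro ⟨ρ, e1, e2, e3, e4⟩
      refine ⟨ρ, e1, ?_, e3, e4⟩
      by_contra hc
      have := hp.lv ρ (by omega) e2
      omega

theorem LoopInv.exit {N0 i : ℕ} {kctx : ℕ → ℕ} {N N' : ℕ} {C : Finset (Dom m)}
    {star : Bool} {j : ℕ} {Crec : Finset (Dom m)} {st st₁ : Store m}
    (h : LoopInv ℓ k1 k2 lvl av ax N0 (i + 1) kctx N C star j Crec st)
    (hp : Post ℓ k1 k2 lvl av ax N N' i st₁) :
    Post ℓ k1 k2 lvl av ax N0 N' (i + 1) (recStore ℓ k1 k2 (i + 1) kctx Crec st₁) := by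
  obtain ⟨a1, a2, a3⟩ := h.after hp
  refine ⟨h.le.trans hp.le, ?_, hp.good, ?_⟩
  · intro ν h1 h2
    by_cases h3 : ν ≤ N
    · exact h.lv ν h1 h3
    · have := hp.lv ν (by omega) h2
      omega
  · intro i' h1 h2 hd hor
    have hag : Agree ℓ (i + 1) (idxAt lvl N') kctx := fun t ht1 ht2 => by
      rw [a1 t (by omega), h.ag t ht1 ht2]
    unfold recStore
    by_cases hi' : i' = i + 1
    · subst hi'
      by_cases hk : Agree ℓ (i + 1) kctx k1
      · rw [if_pos ⟨hk, hd⟩]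
        simpa using a3 hk hd
      · rw [if_neg (fun hc => hk hc.1)]
        refine hp.store (i + 1) h1 h2 hd (Or.inl fun hc => hk fun t ht1 ht2 => ?_)
        rw [← hag t ht1 ht2, hc t ht1 ht2]
    · have := hp.store i' h1 h2 hd (hor.imp_right fun _ => by omega)
      split_ifs
      · simpa [hi'] using this
      · exact this

theorem LoopInv.next {N0 i : ℕ} {kctx : ℕ → ℕ} {N N' : ℕ} {C : Finset (Dom m)}
    {star : Bool} {j : ℕ} {Crec : Finset (Dom m)} {st st₁ : Store m}
    (h : LoopInv ℓ k1 k2 lvl av ax N0 (i + 1) kctx N C star j Crec st)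
    (hp : Post ℓ k1 k2 lvl av ax N N' i st₁) (hi : i + 1 ≤ ℓ) (b x : Fin m)
    (hlv : lvl (N' + 1) = i + 1) (hav : av (N' + 1) = some (pickY C star b))
    (hax : ax (N' + 1) = some x)
    (hb : Agree ℓ i (stepCtx (i + 1) j kctx) k2 ∨ b = x) :
    LoopInv ℓ k1 k2 lvl av ax N0 (i + 1) kctx (N' + 1) (insert (pickY C star b) C)
      (pickStar C star b) (j + 1)
      (if j + 1 ≤ k1 (i + 1) then insert (pickY C star b) C else Crec) st₁ := by
  obtain ⟨a1, a2, a3⟩ := h.after hp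
  have hle := hp.le
  have hl2 : ∀ ν, 1 ≤ ν → ν ≤ N' + 1 → lvl ν ≤ ℓ := by
    intro ν h1 h2
    by_cases h3 : ν = N' + 1
    · rw [h3, hlv]; exact hi
    · exact (hp.good ν h1 (by omega)).2.1
  -- index of the new node
  have ixI : idxAt lvl (N' + 1) (i + 1) = j + 1 := by
    rw [idxAt_succ, hlv, if_pos rfl, a1 _ (by omega), h.hj]
  have ixhi : ∀ t, i + 1 < t → idxAt lvl (N' + 1) t = idxAt lvl N' t := by
    intro t ht
    rw [idxAt_succ, hlv, if_neg (by omega), if_pos ht]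
  have hag : Agree ℓ (i + 1) (idxAt lvl (N' + 1)) kctx := by
    intro t ht1 ht2
    rw [ixhi t ht1, a1 t (by omega), h.ag t ht1 ht2]
  have ixlo : ∀ t, t < i + 1 → idxAt lvl (N' + 1) t = 0 := by
    intro t ht
    rw [idxAt_succ, hlv, if_neg (by omega), if_neg (by omega)]
  -- membership in `S` transfers
  have hS : ∀ ρ, InS ℓ k1 k2 lvl (i + 1) (idxAt lvl (N' + 1)) ρ →
      InS ℓ k1 k2 lvl (i + 1) kctx ρ := by
    rintro ρ ⟨e1, e2 | ⟨⟨r1, r2⟩, e2⟩⟩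
    · exact ⟨e1, Or.inl fun t h1 h2 => (e2 t h1 h2).trans (hag t h1 h2)⟩
    · exact ⟨e1, Or.inr ⟨⟨fun t h1 h2 => (hag t h1 h2).symm.trans (r1 t h1 h2), r2⟩, e2⟩⟩
  have hS' : ∀ ρ, InS ℓ k1 k2 lvl (i + 1) kctx ρ →
      InS ℓ k1 k2 lvl (i + 1) (idxAt lvl (N' + 1)) ρ := by
    rintro ρ ⟨e1, e2 | ⟨⟨r1, r2⟩, e2⟩⟩
    · exact ⟨e1, Or.inl fun t h1 h2 => (e2 t h1 h2).trans (hag t h1 h2).symm⟩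
    · exact ⟨e1, Or.inr ⟨⟨fun t h1 h2 => (hag t h1 h2).trans (r1 t h1 h2), r2⟩, e2⟩⟩
  have hbad : Agree ℓ i (stepCtx (i + 1) j kctx) k2 → Bad ℓ k2 lvl (N' + 1) := by
    intro hc
    unfold Bad
    rw [hlv]
    constructor
    · have := hc (i + 1) (by omega) hi
      unfold stepCtx at this
      rw [if_pos rfl] at this
      rw [ixI, this]
    · intro t ht1 ht2
      have := hc t (by omega) ht2
      unfold stepCtx at this
      rw [if_neg (by omega), if_pos ht1] at this
      rw [hag t ht1 ht2, this]
  have hgood : Good ℓ k1 k2 lvl av ax (N' + 1) := by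
    refine ⟨by omega, by omega, pickY C star b, x, hav, hax, ?_, ?_, ?_⟩
    · rw [hlv]
      intro ρ h1 h2 h3 h4
      exact pickY_notMem C star b ((a2 _).2 ⟨ρ, h1, by omega, hS ρ h3, h4⟩)
    · intro b' hb'
      rcases hb with hb | hb
      · exact Or.inl (hbad hb)
      · right
        subst hb
        unfold pickY at hb'
        split_ifs at hb'
        exact (Sum.inl.inj hb').symm
    · intro s hs
      rcases hb with hb | hb
      · exact Or.inl (hbad hb)
      · right
        subst hb
        rw [hlv]
        by_cases hst : star = true
        · left
          obtain ⟨ρ, s', e1, e2, e3, e4, e5⟩ := h.hstar hst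
          exact ⟨ρ, s', e1, by omega, e3, fun t h1 h2 => (e4 t h1 h2).trans (hag t h1 h2).symm, e5⟩
        · right
          have hmem : (Sum.inl b : Dom m) ∈ C := by
            by_contra hn
            unfold pickY at hs
            rw [if_pos ⟨by simpa using hst, hn⟩] at hs
            cases hs
          obtain ⟨ρ, e1, e2, e3, e4⟩ := (a2 _).1 hmem
          exact ⟨ρ, e1, by omega, hS' ρ e3, e4⟩
  have hgoodAll : ∀ ν, 1 ≤ ν → ν ≤ N' + 1 → Good ℓ k1 k2 lvl av ax ν := by
    intro ν h1 h2
    by_cases h3 : ν = N' + 1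
    · rw [h3]; exact hgood
    · exact hp.good ν h1 (by omega)
  have hC' : ∀ y, y ∈ insert (pickY C star b) C ↔
      ∃ ρ, 1 ≤ ρ ∧ ρ ≤ N' + 1 ∧ InS ℓ k1 k2 lvl (i + 1) kctx ρ ∧ av ρ = some y := by
    intro y
    rw [Finset.mem_insert, a2 y]
    constructor
    · rintro (rfl | ⟨ρ, e1, e2, e3⟩)
      · exact ⟨N' + 1, by omega, le_rfl, ⟨hlv, Or.inl hag⟩, hav⟩
      · exact ⟨ρ, e1, by omega, e3⟩
    · rintro ⟨ρ, e1, e2, e3, e4⟩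
      by_cases h3 : ρ = N' + 1
      · left
        rw [h3, hav] at e4
        exact (Option.some.inj e4).symm
      · exact Or.inr ⟨ρ, e1, by omega, e3, e4⟩
  refine ⟨by have := h.le; omega, ?_, hgoodAll, hag, ixI, fun t _ h2 => ixlo t h2, hC', ?_, ?_, ?_⟩
  · intro ν h1 h2
    by_cases h3 : ν = N' + 1
    · rw [h3, hlv]
    by_cases h4 : ν ≤ N
    · exact h.lv ν h1 h4
    · have := hp.lv ν (by omega) (by omega)
      omega
  · intro hs
    unfold pickStar at hs
    split_ifs at hs with hcond
    refine ⟨N' + 1, freshStar C, by omega, le_rfl, hlv, hag, ?_⟩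
    rw [hav]
    unfold pickY
    rw [if_neg hcond]
  · intro hk hd
    have hR : ¬ Rel ℓ k1 k2 (i + 1) kctx := fun hR => not_agree_of_rel hR.1 hd hk
    split_ifs with hjk
    · intro y
      rw [hC' y]
      constructor
      · rintro ⟨ρ, e1, e2, ⟨e3, e4 | ⟨e4, -⟩⟩, e5⟩
        · refine ⟨ρ, e1, e2, e3, fun t h1 h2 => (e4 t h1 h2).trans (hk t h1 h2), ?_, e5⟩
          have hbt := lvl_between (lvl := lvl) (ℓ := ℓ) (ν := ρ) (ρ := N' + 1) (i := i + 1)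
            (fun σ h5 h6 => hl2 σ (by omega) h6)
            (fun t ht1 ht2 => (e4 t ht1 ht2).trans (hag t ht1 ht2).symm)
          have := idx_le e2 hbt
          omega
        · exact absurd e4 hR
      · rintro ⟨ρ, e1, e2, e3, e4, -, e5⟩
        exact ⟨ρ, e1, e2, ⟨e3, Or.inl fun t h1 h2 => (e4 t h1 h2).trans (hk t h1 h2).symm⟩, e5⟩
    · intro y
      rw [a3 hk hd y]
      constructor
      · rintro ⟨ρ, e1, e2, e3⟩
        exact ⟨ρ, e1, by omega, e3⟩
      · rintro ⟨ρ, e1, e2, e3, e4, e5, e6⟩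
        refine ⟨ρ, e1, ?_, e3, e4, e5, e6⟩
        by_contra hc
        have : ρ = N' + 1 := by omega
        subst this
        omega
  · intro i' h1 h2 hd hna
    have hT : TagS ℓ k1 lvl av ((st₁ i').getD ∅) i' N' := by
      refine hp.store i' h1 h2 hd ?_
      by_cases hi' : i' ≤ i
      · exact Or.inr hi'
      · left
        intro hc
        exact hna fun t ht1 ht2 => (ixhi t (by omega)).trans (hc t ht1 ht2)
    intro y
    rw [hT y]
    constructor
    · rintro ⟨ρ, e1, e2, e3⟩
      exact ⟨ρ, e1, by omega, e3⟩
    · rintro ⟨ρ, e1, e2, e3, e4, e5⟩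
      refine ⟨ρ, e1, ?_, e3, e4, e5⟩
      by_contra hc
      have : ρ = N' + 1 := by omega
      subst this
      exact hna e4

end Abstract

/-! ### The walk satisfies the invariants -/

theorem node_at {w p : List (Node m n)} {nd : Node m n} (h : p ++ [nd] <+: w) :
    w[p.length]? = some nd := by
  obtain ⟨q, rfl⟩ := h
  simp

theorem levelOf_eq {ℓ : ℕ} {g : ℕ → Dom m → Bool} {w : List (Node m n)} {ν i : ℕ} {y : Dom m}
    (hi1 : 1 ≤ i) (hi : i ≤ ℓ) (hy : tagAt w ν i = some y) (hg : g i y = true)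
    (hlo : ∀ t, 1 ≤ t → t < i → ∀ y, tagAt w ν t = some y → g t y = false) :
    levelOf ℓ g w ν = i := by
  unfold levelOf
  have hex : ∃ i, (1 ≤ i ∧ i ≤ ℓ) ∧ ∃ y, tagAt w ν i = some y ∧ g i y = true :=
    ⟨i, ⟨hi1, hi⟩, y, hy, hg⟩
  rw [dif_pos hex, Nat.find_eq_iff]
  refine ⟨⟨⟨hi1, hi⟩, y, hy, hg⟩, ?_⟩
  rintro t ht ⟨⟨h1, -⟩, y', h2, h3⟩
  rw [hlo t h1 ht y' h2] at h3
  cases h3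

theorem loop_main {a : Fin n → Fin m} {g : ℕ → Dom m → Bool} {r : ℕ → Dom m → Fin n}
    {ℓ : ℕ} {k1 k2 : ℕ → ℕ} (w : List (Node m n)) (f i : ℕ) (hi : i + 1 ≤ ℓ) (kctx : ℕ → ℕ)
    (hcall : ∀ (k : ℕ → ℕ) (st : Store m) (s : Fin n) (W : List (Node m n)) (st' : Store m)
      (p : List (Node m n)), rwalkF a g r ℓ k1 k2 f i k st s = some (W, st') →
      Pre ℓ k1 k2 (levelOf ℓ g w) (aAt ℓ g w) (fun ν => (vtxAt w ν).map a) p.length i k st →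
      p ++ W.dropLast <+: w →
      Post ℓ k1 k2 (levelOf ℓ g w) (aAt ℓ g w) (fun ν => (vtxAt w ν).map a)
        p.length (p ++ W.dropLast).length i st')
    (p : List (Node m n)) (fuel : ℕ) :
    ∀ {C : Finset (Dom m)} {star : Bool} {sj : Fin n} {acc : List (Node m n)} {j : ℕ}
      {Crec : Finset (Dom m)} {st : Store m} {W : List (Node m n)} {st' : Store m},
    rloopF a g r ℓ k1 k2 (fun k' st' sj => rwalkF a g r ℓ k1 k2 f i k' st' sj)
      (fun sj => ((walkF a g r f i sj).bind List.getLast?).map Node.vtx)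
      (i + 1) kctx fuel C star sj acc j Crec st = some (W, st') →
    LoopInv ℓ k1 k2 (levelOf ℓ g w) (aAt ℓ g w) (fun ν => (vtxAt w ν).map a)
      p.length (i + 1) kctx (p ++ acc).length C star j Crec st →
    p ++ W.dropLast <+: w →
    Post ℓ k1 k2 (levelOf ℓ g w) (aAt ℓ g w) (fun ν => (vtxAt w ν).map a)
      p.length (p ++ W.dropLast).length (i + 1) st' := by
  have hshape : ∀ (k : ℕ → ℕ) (st : Store m) (s : Fin n) (W : List (Node m n)) (nd : Node m n)
      (st' : Store m), rwalkF a g r ℓ k1 k2 f i k st s = some (W ++ [nd], st') →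
      ∀ t, 1 ≤ t → t ≤ i → ∀ y, nd.tag t = some y → g t y = false := by
    intro k st s W nd st' h t h1 h2 y hy
    obtain ⟨W1, nd1, f1, f2⟩ := rwalkF_shape i f k st s _ st' h
    have := List.append_inj' f1 rfl
    have h3 : nd = nd1 := by simpa using this.2
    subst h3
    exact f2 t h1 h2 y hy
  induction fuel with
  | zero => intro C star sj acc j Crec st W st' h; simp [rloopF] at h
  | succ fuel ih =>
    intro C star sj acc j Crec st W st' h hinv hpre
    obtain ⟨W0, nd, st₁, xv, h1, hU, h3⟩ := rloopF_step h
    rcases h3 with ⟨h2, h3⟩ | ⟨h2, h3, h4⟩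
    · obtain ⟨W1, nd', e1, e2, -⟩ := rloopF_shape hshape fuel h3
      have hpre' : p ++ (acc ++ W0 ++ [setTag nd (i + 1) (pickY C star (a xv))]) <+: w := by
        refine List.IsPrefix.trans ?_ hpre
        rw [e1, List.dropLast_concat, List.prefix_append_right_inj]
        exact e2
      have hpre2 : ((p ++ acc) ++ W0) ++ [setTag nd (i + 1) (pickY C star (a xv))] <+: w := by
        simpa [List.append_assoc] using hpre'
      have hpost := hcall _ _ _ _ _ (p ++ acc) h1 hinv.pre (by
        rw [List.dropLast_concat]
        exact (List.prefix_append _ _).trans hpre2)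
      rw [List.dropLast_concat] at hpost
      have hnode := node_at hpre2
      have htag : ∀ t, tagAt w (((p ++ acc) ++ W0).length + 1) t =
          (setTag nd (i + 1) (pickY C star (a xv))).tag t := by
        intro t
        unfold tagAt
        rw [if_neg (by omega), Nat.add_sub_cancel, hnode]
        rfl
      have hlev : levelOf ℓ g w (((p ++ acc) ++ W0).length + 1) = i + 1 := by
        refine levelOf_eq (by omega) hi (y := pickY C star (a xv)) ?_ h2 ?_
        · rw [htag]; simp [setTag]
        · intro t ht1 ht2 y hy
          rw [htag] at hy
          simp only [setTag] at hy
          rw [if_neg (by omega)] at hy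
          exact hshape _ _ _ _ _ _ h1 t ht1 (by omega) y hy
      have hnext := hinv.next hpost hi (a xv) (a nd.vtx) hlev
        (by unfold aAt; rw [hlev, htag]; simp [setTag])
        (by
          unfold vtxAt
          rw [if_neg (by omega), Nat.add_sub_cancel, hnode]
          rfl)
        (by
          by_cases hag : Agree ℓ i (stepCtx (i + 1) j kctx) k2
          · exact Or.inl hag
          · right
            have hs := rwalkF_eq i f _ _ _ _ _ h1 hag
            simp [hs] at hU
            rw [hU])
      refine ih h3 ?_ hpre
      have hlen : ((p ++ acc) ++ W0).length + 1 =
          (p ++ (acc ++ W0 ++ [setTag nd (i + 1) (pickY C star (a xv))])).length := by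
        simp; omega
      rw [← hlen]
      exact hnext
    · rw [h3, List.dropLast_concat] at hpre ⊢
      rw [← List.append_assoc] at hpre ⊢
      have hpost := hcall _ _ _ _ _ (p ++ acc) h1 hinv.pre (by
        rw [List.dropLast_concat]
        exact hpre)
      rw [List.dropLast_concat] at hpost
      rw [h4]
      exact hinv.exit hpost

theorem walk_main {a : Fin n → Fin m} {g : ℕ → Dom m → Bool} {r : ℕ → Dom m → Fin n}
    {ℓ : ℕ} {k1 k2 : ℕ → ℕ} (w : List (Node m n)) (i : ℕ) (hi : i ≤ ℓ) :
    ∀ (f : ℕ) (k : ℕ → ℕ) (st : Store m) (s : Fin n) (W : List (Node m n)) (st' : Store m)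
      (p : List (Node m n)), rwalkF a g r ℓ k1 k2 f i k st s = some (W, st') →
      Pre ℓ k1 k2 (levelOf ℓ g w) (aAt ℓ g w) (fun ν => (vtxAt w ν).map a) p.length i k st →
      p ++ W.dropLast <+: w →
      Post ℓ k1 k2 (levelOf ℓ g w) (aAt ℓ g w) (fun ν => (vtxAt w ν).map a)
        p.length (p ++ W.dropLast).length i st' := by
  induction i with
  | zero =>
    intro f k st s W st' p h hP _
    have : W = [⟨s, fun _ => none⟩] ∧ st' = st := by
      cases f <;> simp [rwalkF] at h <;> simp [h.1, h.2]
    obtain ⟨rfl, rfl⟩ := this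
    simp only [List.dropLast_singleton, List.append_nil]
    refine ⟨le_rfl, fun ν h1 h2 => by omega, hP.good, ?_⟩
    intro i' h1 h2 hd hor
    exact hP.store i' h1 h2 hd (hor.resolve_right (by omega))
  | succ i ih =>
    intro f k st s W st' p h hP hpre
    cases f with
    | zero => simp [rwalkF] at h
    | succ f =>
      rw [rwalkF] at h
      refine loop_main w f i hi k (ih (by omega) f) p (f + 1) h ?_ hpre
      rw [List.append_nil]
      exact hP.loopInv (by omega) hi _ (by unfold Rel; congr)

theorem extRWalk_good {a : Fin n → Fin m} {g : ℕ → Dom m → Bool} {r : ℕ → Dom m → Fin n}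
    {ℓ : ℕ} {k1 k2 : ℕ → ℕ} {s : Fin n} {w : List (Node m n)}
    (hw : extRWalk a g r ℓ k1 k2 s = some w) :
    levelOf ℓ g w 0 = ℓ + 1 ∧ ∀ ν, 1 ≤ ν → ν ≤ w.length - 1 →
      Good ℓ k1 k2 (levelOf ℓ g w) (aAt ℓ g w) (fun ν => (vtxAt w ν).map a) ν := by
  have h0 : levelOf ℓ g w 0 = ℓ + 1 := by
    unfold levelOf
    rw [dif_neg]
    rintro ⟨i, -, y, h, -⟩
    simp [tagAt] at h
  refine ⟨h0, ?_⟩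
  unfold extRWalk at hw
  split_ifs at hw with hex
  simp only [Option.map_eq_some_iff] at hw
  obtain ⟨⟨W, st'⟩, h1, h2⟩ := hw
  simp only at h2
  subst h2
  have hpost := walk_main W ℓ le_rfl _ _ _ _ W st' [] h1 (by
    refine ⟨?_, fun _ _ _ => rfl, ?_, ?_⟩
    · intro t _ h2
      exact idxAt_zero h0 t h2
    · intro ν h1 h2
      simp at h2
      omega
    · intro i' h1 h2 _ _ y
      constructor
      · intro h; simp at h
      · rintro ⟨ρ, e1, e2, -⟩
        simp at e2
        omega) (by simpa using List.dropLast_prefix W)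
  intro ν h1 h2
  exact hpost.good ν h1 (by simpa using h2)

/-- Lemma 6.16: structure of bad cases for the relaxed extended walk. -/
theorem statement_16 (ℓ m n : ℕ) (hℓ : 0 < ℓ) (hm : 0 < m) (hn : 0 < n)
    (a : Fin n → Fin m) (u v : Fin n) (huv : u ≠ v) (hav : a u = a v)
    (k1 k2 : ℕ → ℕ) (hlt : IdxLt ℓ k1 k2)
    (g : ℕ → Dom m → Bool) (r : ℕ → Dom m → Fin n) (s : Fin n)
    (w : List (Node m n)) (hw : extRWalk a g r ℓ k1 k2 s = some w)
    (μ₁ μ₂ : ℕ) (hμ₁ : HasIdx ℓ (levelOf ℓ g w) w.length μ₁ k1)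
    (hμ₂ : HasIdx ℓ (levelOf ℓ g w) w.length μ₂ k2)
    (hu : vtxAt w (μ₁ + 1) = some u) (hv : vtxAt w (μ₂ + 1) = some v)
    (hdup : ∃ α β x y, 0 < α ∧ α < β ∧ β < μ₂ + 1 ∧
      vtxAt w α = some x ∧ vtxAt w β = some y ∧ a x = a y) :
    ∃ α β x y, 1 ≤ α ∧ α ≤ w.length ∧ 1 ≤ β ∧ β ≤ w.length ∧ α ≠ β ∧
      vtxAt w α = some x ∧ vtxAt w β = some y ∧ a x = a y ∧
      ¬(α = μ₁ + 1 ∧ β = μ₂ + 1) ∧ ¬(α = μ₂ + 1 ∧ β = μ₁ + 1) ∧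
      ¬ Collision (levelOf ℓ g w) (aAt ℓ g w) μ₁ μ₂ ∧
      ¬ Collision (levelOf ℓ g w) (aAt ℓ g w) μ₁ (α - 1) ∧
      ¬ Collision (levelOf ℓ g w) (aAt ℓ g w) μ₁ (β - 1) ∧
      ¬ Collision (levelOf ℓ g w) (aAt ℓ g w) μ₂ (α - 1) ∧
      ¬ Collision (levelOf ℓ g w) (aAt ℓ g w) μ₂ (β - 1) ∧
      ¬ Collision (levelOf ℓ g w) (aAt ℓ g w) (α - 1) (β - 1) := by
  obtain ⟨h0, hG⟩ := extRWalk_good hw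
  have hlen : ∀ μ (x : Fin n), vtxAt w (μ + 1) = some x → μ ≤ w.length - 1 ∧ μ + 1 ≤ w.length := by
    intro μ x h
    unfold vtxAt at h
    rw [if_neg (by omega), Nat.add_sub_cancel, Option.map_eq_some_iff] at h
    obtain ⟨nd, h, -⟩ := h
    obtain ⟨h, -⟩ := List.getElem?_eq_some_iff.1 h
    omega
  have hl1 := hlen _ _ hu
  have hl2 := hlen _ _ hv
  obtain ⟨α, β, x, y, h1, h2, h3, h4, h5, h6⟩ := hdup
  obtain ⟨α', β', ⟨p1, p2, p3, p4, p5, b, p6, p7⟩, hinj⟩ :=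
    good_final ℓ k1 k2 (levelOf ℓ g w) (aAt ℓ g w) (fun ν => (vtxAt w ν).map a) (w.length - 1)
      μ₁ μ₂ h0 hG hlt hl1.1 hl2.1 hμ₁.2 hμ₂.2 α β
      ⟨h1, by omega, by omega, by omega, by omega, a x, by simp [h4], by simp [h5, h6]⟩
  simp only [Option.map_eq_some_iff] at p6 p7
  obtain ⟨x', q1, q2⟩ := p6
  obtain ⟨y', q3, q4⟩ := p7
  have hnc : ∀ ν ρ, (∀ z, OnPath (levelOf ℓ g w) z ν → InU (levelOf ℓ g w) μ₁ μ₂ α' β' z) →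
      (∀ z, OnPath (levelOf ℓ g w) z ρ → InU (levelOf ℓ g w) μ₁ μ₂ α' β' z) →
      ¬ Collision (levelOf ℓ g w) (aAt ℓ g w) ν ρ := by
    rintro ν ρ hν hρ ⟨e, f, c1, c2, c3, c4, c5, c6⟩
    have := hinj e f (hν e c1) (hρ f c3) (Nat.zero_le _) c5 c6
    subst this
    exact c4 c1
  have u1 : ∀ z, OnPath (levelOf ℓ g w) z μ₁ → InU (levelOf ℓ g w) μ₁ μ₂ α' β' z :=
    fun z h => Or.inl (Or.inl h)
  have u2 : ∀ z, OnPath (levelOf ℓ g w) z μ₂ → InU (levelOf ℓ g w) μ₁ μ₂ α' β' z :=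
    fun z h => Or.inl (Or.inr h)
  have u3 : ∀ z, OnPath (levelOf ℓ g w) z (α' - 1) → InU (levelOf ℓ g w) μ₁ μ₂ α' β' z :=
    fun z h => Or.inr (Or.inl h)
  have u4 : ∀ z, OnPath (levelOf ℓ g w) z (β' - 1) → InU (levelOf ℓ g w) μ₁ μ₂ α' β' z :=
    fun z h => Or.inr (Or.inr h)
  exact ⟨α', β', x', y', p1, by omega, p3, by omega, p5, q1, q3, q2.trans q4.symm,
    by omega, by omega, hnc _ _ u1 u2, hnc _ _ u1 u3, hnc _ _ u1 u4, hnc _ _ u2 u3,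
    hnc _ _ u2 u4, hnc _ _ u3 u4⟩

end EDW
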